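/- arXiv:2604.01992 — 3 statements merged into one kernel-verified Lean document; each statement's English description precedes it below -/
import Mathlib

section
/- Let (K, v_K) be a field with a non-trivial real-valued valuation, let L = K(T) be the field of rational functions in one variable over K, and let w be any real-valued valuation on L extending v_K, with ring of integers L° = {f ∈ L : w(f) ≥ 0}. Then H₁(𝕃_{L°/K°}) = 0, i.e. the L°-module Algebra.H1Cotangent K° L° is trivial. -/
set_option synthInstance.maxHeartbeats 800000
set_option maxHeartbeats 1600000

noncomputable section

/-- The unit ball (ring of integers) of a real-valued additive semi-valuation. -/
def AddValuation.unitBall {A : Type*} [CommRing A] (v : AddValuation A (WithTop ℝ)) :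
    Subring A where
  carrier := {a | 0 ≤ v a}
  zero_mem' := by simp only [Set.mem_setOf_eq, AddValuation.map_zero]; exact le_top
  one_mem' := by simp only [Set.mem_setOf_eq, AddValuation.map_one]; exact le_refl _
  add_mem' := by
    intro a b ha hb
    exact le_trans (le_min ha hb) (v.map_add a b)
  mul_mem' := by
    intro a b ha hb
    simp only [Set.mem_setOf_eq, AddValuation.map_mul]
    exact add_nonneg ha hb
  neg_mem' := by
    intro a ha
    simpa only [Set.mem_setOf_eq, AddValuation.map_neg] using ha

/-- A real-valued additive valuation on a field is *non-trivial* if it does not vanish on all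
of `K^×`. -/
def AddValuation.IsNontrivial {K : Type*} [Field K] (v : AddValuation K (WithTop ℝ)) : Prop :=
  ∃ x : K, x ≠ 0 ∧ v x ≠ 0

/-! Formal products of nonzero polynomials whose value lies in `L°` form a monoid `P` with
`l ∈ P` or `-l ∈ P` for all `l`, and `L°` is a quotient of the monoid algebra `K°[P]`. By the
multidimensional Euclidean algorithm of Perron and Elliott, finitely many elements of `P` lie in a
free submonoid of `P`, up to sign, so `K°[P]` is a filtered union of formally smooth `K°`-algebras.
Hence `H₁` vanishes as soon as every relation killed by all derivations `K°[P] → L°` lies in the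
square of the ideal of relations.

This is proved for larger and larger sets `U` of admissible polynomials. Constants are handled
by the same algorithm. If `f` has minimal degree outside `U`, then Euclidean division shows that,
modulo relations over `U`, every relation is a multiple of one which is linear in `f`. The
logarithmic derivative with respect to the exponent of `f` then shows that a relation killed by all
derivations is, up to a product of two relations, a relation over `U`.
-/

open Module

section OneSigned

variable {Λ ι : Type*} [AddCommGroup Λ]

theorem exists_basis_sub (b : Basis ι ℤ Λ) {i j : ι} (hij : i ≠ j) :
    ∃ b' : Basis ι ℤ Λ, b' i = b i - b j ∧ (∀ k ≠ i, b' k = b k) ∧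
      ∀ x, b'.repr x = b.repr x + Finsupp.single j (b.repr x i) := by
  classical
  have hneg : b.coord i (-b j) = 0 := by simp [hij.symm]
  refine ⟨b.map (LinearEquiv.transvection hneg), ?_, fun k hk ↦ ?_, fun x ↦ ?_⟩
  · simp [LinearMap.transvection.apply, sub_eq_add_neg]
  · simp [LinearMap.transvection.apply, hk]
  · rw [Basis.map_repr, LinearEquiv.trans_apply,
      LinearEquiv.transvection.symm_eq' hneg (by simp [hij.symm])]
    simp [LinearMap.transvection.apply]

theorem mem_closure_range_of_repr_nonneg (b : Basis ι ℤ Λ) {x : Λ} (hx : ∀ k, 0 ≤ b.repr x k) :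
    x ∈ AddSubmonoid.closure (Set.range b) := by
  rw [← b.linearCombination_repr x, Finsupp.linearCombination_apply]
  refine sum_mem fun k _ ↦ ?_
  obtain ⟨n, hn⟩ := Int.eq_ofNat_of_zero_le (hx k)
  simp only [hn, natCast_zsmul]
  exact nsmul_mem (AddSubmonoid.subset_closure (Set.mem_range_self k)) _

variable {P : AddSubmonoid Λ}

theorem exists_basis_closure_le_of_sub_mem (b : Basis ι ℤ Λ) (hb : ∀ k, b k ∈ P) {i j : ι}
    (hij : i ≠ j) (h : b i - b j ∈ P) :
    ∃ b' : Basis ι ℤ Λ, (∀ k, b' k ∈ P) ∧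
      AddSubmonoid.closure (Set.range b) ≤ AddSubmonoid.closure (Set.range b') ∧
      ∀ x, b'.repr x = b.repr x + Finsupp.single j (b.repr x i) := by
  obtain ⟨b', hi, hk, hrepr⟩ := exists_basis_sub b hij
  refine ⟨b', fun k ↦ ?_, ?_, hrepr⟩
  · obtain rfl | hki := eq_or_ne k i
    · rwa [hi]
    · exact hk k hki ▸ hb k
  · have hmem (k : ι) : b' k ∈ AddSubmonoid.closure (Set.range b') :=
      AddSubmonoid.subset_closure (Set.mem_range_self k)
    rw [AddSubmonoid.closure_le, Set.range_subset_iff]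
    intro k
    obtain rfl | hki := eq_or_ne k i
    · have : b k = b' k + b' j := by rw [hi, hk j hij.symm, sub_add_cancel]
      exact this ▸ add_mem (hmem k) (hmem j)
    · exact hk k hki ▸ hmem k

theorem exists_basis_repr_eq_add (hP : ∀ l, l ∈ P ∨ -l ∈ P) (s : Λ) (b : Basis ι ℤ Λ)
    (hb : ∀ k, b k ∈ P) {i j : ι} (hij : i ≠ j) :
    ∃ b' : Basis ι ℤ Λ, (∀ k, b' k ∈ P) ∧
      AddSubmonoid.closure (Set.range b) ≤ AddSubmonoid.closure (Set.range b') ∧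
      ∃ k₀, (k₀ = i ∨ k₀ = j) ∧ b'.repr s k₀ = b.repr s i + b.repr s j ∧
        ∀ k ≠ k₀, b'.repr s k = b.repr s k := by
  rcases hP (b i - b j) with h | h
  · obtain ⟨b', hb', hle, hrepr⟩ := exists_basis_closure_le_of_sub_mem b hb hij h
    exact ⟨b', hb', hle, j, .inr rfl, by simp [hrepr, add_comm], fun k hk ↦ by simp [hrepr, hk]⟩
  · rw [neg_sub] at h
    obtain ⟨b', hb', hle, hrepr⟩ := exists_basis_closure_le_of_sub_mem b hb hij.symm h
    exact ⟨b', hb', hle, i, .inl rfl, by simp [hrepr], fun k hk ↦ by simp [hrepr, hk]⟩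

-- If the extremal coordinates of `s` have opposite signs, subtracting the smaller of the two basis
-- vectors from the larger one replaces one of them by their sum, which is not extremal.
theorem exists_basis_mem_closure_of_bounds [Finite ι] (hP : ∀ l, l ∈ P ∨ -l ∈ P) (s : Λ)
    (b : Basis ι ℤ Λ) (hb : ∀ k, b k ∈ P) (m M : ℤ) (hm : ∀ k, m ≤ b.repr s k)
    (hM : ∀ k, b.repr s k ≤ M) :
    ∃ b' : Basis ι ℤ Λ, (∀ k, b' k ∈ P) ∧
      AddSubmonoid.closure (Set.range b) ≤ AddSubmonoid.closure (Set.range b') ∧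
      (s ∈ AddSubmonoid.closure (Set.range b') ∨ -s ∈ AddSubmonoid.closure (Set.range b')) := by
  classical
  by_cases hm0 : 0 ≤ m
  · exact ⟨b, hb, le_rfl, .inl (mem_closure_range_of_repr_nonneg b fun k ↦ hm0.trans (hm k))⟩
  by_cases hM0 : M ≤ 0
  · refine ⟨b, hb, le_rfl, .inr (mem_closure_range_of_repr_nonneg b fun k ↦ ?_)⟩
    simpa using (hM k).trans hM0
  by_cases hi : ∃ i, b.repr s i = M
  swap
  · exact exists_basis_mem_closure_of_bounds hP s b hb m (M - 1) hm
      fun k ↦ Int.le_sub_one_of_lt ((hM k).lt_of_ne fun h ↦ hi ⟨k, h⟩)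
  by_cases hj : ∃ j, b.repr s j = m
  swap
  · exact exists_basis_mem_closure_of_bounds hP s b hb (m + 1) M
      (fun k ↦ (hm k).lt_of_ne fun h ↦ hj ⟨k, h.symm⟩) hM
  obtain ⟨i, hi⟩ := hi
  obtain ⟨j, hj⟩ := hj
  obtain ⟨b', hb', hle, k₀, hk₀, hsum, hrepr⟩ :=
    exists_basis_repr_eq_add hP s b hb (i := i) (j := j) (by rintro rfl; omega)
  obtain ⟨b'', hb'', hle', h⟩ := exists_basis_mem_closure_of_bounds hP s b' hb' m M
    (fun k ↦ by obtain rfl | hk := eq_or_ne k k₀; exacts [by omega, hrepr k hk ▸ hm k])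
    (fun k ↦ by obtain rfl | hk := eq_or_ne k k₀; exacts [by omega, hrepr k hk ▸ hM k])
  exact ⟨b'', hb'', hle.trans hle', h⟩
termination_by ((M - m).toNat, {k | b.repr s k = m ∨ b.repr s k = M}.ncard)
decreasing_by
  · refine Prod.Lex.right _ (Set.ncard_lt_ncard ?_ (Set.toFinite _))
    refine Set.ssubset_iff_of_subset (fun k hk ↦ ?_) |>.2 ⟨k₀, ?_, ?_⟩
    · obtain rfl | hne := eq_or_ne k k₀
      · rcases hk with hk | hk <;> omega
      · simpa only [Set.mem_ofPred_eq, hrepr k hne] using hk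
    · rcases hk₀ with rfl | rfl
      exacts [.inr hi, .inl hj]
    · rintro (h | h) <;> omega
  · exact Prod.Lex.left _ _ (by omega)
  · exact Prod.Lex.left _ _ (by omega)

theorem exists_basis_mem [Module.Free ℤ Λ] [Module.Finite ℤ Λ] (hP : ∀ l, l ∈ P ∨ -l ∈ P) :
    ∃ b : Basis (Fin (finrank ℤ Λ)) ℤ Λ, ∀ i, b i ∈ P := by
  choose ε hε using fun l ↦ show ∃ ε : ℤˣ, ε • l ∈ P from
    (hP l).elim (fun h ↦ ⟨1, by simpa using h⟩) fun h ↦ ⟨-1, by simpa using h⟩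
  let b := finBasis ℤ Λ
  refine ⟨b.unitsSMul fun i ↦ ε (b i), fun i ↦ ?_⟩
  rw [Basis.unitsSMul_apply]
  exact hε (b i)

theorem exists_basis_mem_closure [Module.Free ℤ Λ] [Module.Finite ℤ Λ] (hP : ∀ l, l ∈ P ∨ -l ∈ P)
    (F : Finset Λ) :
    ∃ b : Basis (Fin (finrank ℤ Λ)) ℤ Λ, (∀ i, b i ∈ P) ∧ ∀ s ∈ F,
      s ∈ AddSubmonoid.closure (Set.range b) ∨ -s ∈ AddSubmonoid.closure (Set.range b) := by
  induction F using Finset.cons_induction with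
  | empty => simpa using exists_basis_mem hP
  | cons s F _ ih =>
    obtain ⟨b, hb, hF⟩ := ih
    obtain ⟨m, hm⟩ := (Set.finite_range (b.repr s)).bddBelow
    obtain ⟨M, hM⟩ := (Set.finite_range (b.repr s)).bddAbove
    obtain ⟨b', hb', hle, hs⟩ := exists_basis_mem_closure_of_bounds hP s b hb m M
      (fun k ↦ hm ⟨k, rfl⟩) (fun k ↦ hM ⟨k, rfl⟩)
    refine ⟨b', hb', fun t ht ↦ ?_⟩
    obtain rfl | ht := Finset.mem_cons.1 ht
    · exact hs
    · exact (hF t ht).imp (@hle _) (@hle _)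

theorem exists_basis_submodule_mem_closure (hP : ∀ l, l ∈ P ∨ -l ∈ P) (V : Submodule ℤ Λ)
    [Module.Free ℤ V] [Module.Finite ℤ V] {F : Finset Λ} (hF : ∀ s ∈ F, s ∈ V) :
    ∃ b : Basis (Fin (finrank ℤ V)) ℤ V, (∀ i, (b i : Λ) ∈ P) ∧ ∀ s ∈ F,
      s ∈ AddSubmonoid.closure (Set.range fun i ↦ (b i : Λ)) ∨
        -s ∈ AddSubmonoid.closure (Set.range fun i ↦ (b i : Λ)) := by
  classical
  obtain ⟨b, hb, hbF⟩ := exists_basis_mem_closure (P := P.comap V.subtype.toAddMonoidHom)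
    (fun l ↦ hP l) (F.subtype (· ∈ V))
  have hcoe {l : V} (hl : l ∈ AddSubmonoid.closure (Set.range b)) :
      (l : Λ) ∈ AddSubmonoid.closure (Set.range fun i ↦ (b i : Λ)) := by
    have := AddSubmonoid.mem_map_of_mem V.subtype.toAddMonoidHom hl
    rwa [AddMonoidHom.map_mclosure, ← Set.range_comp] at this
  exact ⟨b, hb, fun s hs ↦ (hbF ⟨s, hF s hs⟩ (Finset.mem_subtype.2 hs)).imp hcoe hcoe⟩

end OneSigned

section IndSmooth

variable {A : Type*} [CommRing A]

theorem exists_subalgebra_formallySmooth_of_injective {R S : Type*} [CommRing R] [CommRing S]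
    [Algebra A R] [Algebra A S] [Algebra.FormallySmooth A R] (f : R →ₐ[A] S)
    (hf : Function.Injective f) :
    ∃ S' : Subalgebra A S, Algebra.FormallySmooth A S' ∧ (∀ r, f r ∈ S') ∧
      ∀ r y, f r * y = 1 → y ∈ S' := by
  let M : Submonoid R := (IsUnit.submonoid S).comap f
  have hM (m : M) : IsUnit (f m) := m.2
  let F : Localization M →ₐ[A] S := IsLocalization.liftAlgHom (M := M) hM
  have hF (r : R) : F (algebraMap R _ r) = f r := IsLocalization.lift_eq hM r
  have hF_inj : Function.Injective F := (IsLocalization.lift_injective_iff hM).2 fun x y ↦ by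
    refine ⟨fun h ↦ ?_, fun h ↦ ?_⟩
    · simpa only [hF] using! congrArg F h
    · exact congrArg _ (hf h)
  have : Algebra.FormallySmooth R (Localization M) := .of_isLocalization M
  have : Algebra.FormallySmooth A (Localization M) := .comp A R _
  refine ⟨F.range, .of_equiv (AlgEquiv.ofInjective F hF_inj), fun r ↦ ⟨_, hF r⟩, fun r y h ↦ ?_⟩
  let m : M := ⟨r, .of_mul_eq_one y h⟩
  refine ⟨IsLocalization.mk' _ 1 m, (hM m).mul_left_cancel ?_⟩
  change f r * _ = f r * y
  rw [h, ← hF]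
  exact (map_mul F _ _).symm.trans (by rw [IsLocalization.mk'_spec' _ _ m, map_one, map_one])

variable {Λ : Type*} [AddCommGroup Λ] {P : AddSubmonoid Λ}

theorem exists_linearIndependent_mem_closure [IsAddTorsionFree Λ] (hP : ∀ l, l ∈ P ∨ -l ∈ P)
    (F : Finset Λ) :
    ∃ (n : ℕ) (e : Fin n → Λ), LinearIndependent ℤ e ∧ (∀ i, e i ∈ P) ∧ ∀ s ∈ F,
      s ∈ AddSubmonoid.closure (Set.range e) ∨ -s ∈ AddSubmonoid.closure (Set.range e) := by
  let V : Submodule ℤ Λ := Submodule.span ℤ F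
  obtain ⟨b, hb, hF⟩ := exists_basis_submodule_mem_closure hP V fun _ hs ↦ Submodule.subset_span hs
  exact ⟨_, fun i ↦ b i, b.linearIndependent.map' V.subtype V.ker_subtype, hb, hF⟩

theorem exists_injective_mvPolynomial_algHom (A : Type*) [CommRing A] {n : ℕ} {e : Fin n → Λ}
    (he : LinearIndependent ℤ e) (heP : ∀ i, e i ∈ P) :
    ∃ f : MvPolynomial (Fin n) A →ₐ[A] AddMonoidAlgebra A P, Function.Injective f ∧
      ∀ l ∈ AddSubmonoid.closure (Set.range e),
        ∃ (h : l ∈ P) (r : _), f r = .single ⟨l, h⟩ 1 := by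
  let v : Fin n → P := fun i ↦ ⟨e i, heP i⟩
  have hv : LinearIndependent ℕ v :=
    .of_comp P.subtype.toNatLinearMap (he.restrict_scalars' ℕ)
  refine ⟨AddMonoidAlgebra.mapDomainAlgHom A A (Finsupp.linearCombination ℕ v).toAddMonoidHom,
    AddMonoidAlgebra.mapDomain_injective hv, fun l hl ↦ ?_⟩
  obtain ⟨c, rfl⟩ := AddSubmonoid.mem_closure_range_iff.1 hl
  refine ⟨sum_mem fun i _ ↦ nsmul_mem (heP i) _, MvPolynomial.monomial c 1, ?_⟩
  refine (AddMonoidAlgebra.mapDomain_single ..).trans (congrArg (AddMonoidAlgebra.single · 1) ?_)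
  ext
  simp [Finsupp.linearCombination_apply, Finsupp.sum, v]

theorem exists_subalgebra_formallySmooth_addMonoidAlgebra [IsAddTorsionFree Λ]
    (hP : ∀ l, l ∈ P ∨ -l ∈ P) (F : Finset (AddMonoidAlgebra A P)) :
    ∃ S' : Subalgebra A (AddMonoidAlgebra A P), Algebra.FormallySmooth A S' ∧ ∀ x ∈ F, x ∈ S' := by
  classical
  obtain ⟨n, e, he, heP, heF⟩ := exists_linearIndependent_mem_closure hP
    (F.biUnion fun x ↦ x.coeff.support.image (↑))
  obtain ⟨f, hf, hsingle⟩ := exists_injective_mvPolynomial_algHom A he heP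
  obtain ⟨S', hS', hmem, hinv⟩ := exists_subalgebra_formallySmooth_of_injective f hf
  refine ⟨S', hS', fun x hx ↦ ?_⟩
  rw [← AddMonoidAlgebra.sum_coeff_single x]
  refine sum_mem fun l hl ↦ ?_
  rw [← mul_one (x.coeff l), ← smul_eq_mul, ← AddMonoidAlgebra.smul_single]
  refine Subalgebra.smul_mem _ ?_ _
  rcases heF l (Finset.mem_biUnion.2 ⟨x, hx, Finset.mem_image_of_mem _ hl⟩) with h | h
  · obtain ⟨_, r, hr⟩ := hsingle _ h
    exact hr ▸ hmem r
  · obtain ⟨_, r, hr⟩ := hsingle _ h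
    refine hinv r _ ?_
    rw [hr, AddMonoidAlgebra.single_mul_single, AddMonoidAlgebra.one_def]
    congr
    · ext
      simp
    · exact mul_one 1

end IndSmooth

open scoped TensorProduct

section Descent

variable {A : Type*} [CommRing A]

theorem mvPolynomial_algHom_congr_vars {σ E : Type*} [CommRing E] [Algebra A E]
    {f g : MvPolynomial σ A →ₐ[A] E} {x : MvPolynomial σ A}
    (h : ∀ i ∈ x.vars, f (.X i) = g (.X i)) : f x = g x :=
  MvPolynomial.hom_congr_vars (f₁ := (f : MvPolynomial σ A →+* E)) (f₂ := g)
    (f.comp_algebraMap.trans g.comp_algebraMap.symm) (fun i hi _ ↦ h i hi) rfl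

variable {R B : Type*} [CommRing R] [CommRing B] [Algebra A R] [Algebra R B]

theorem kaehlerDifferential_D_mem_smul_top (hRB : Function.Surjective (algebraMap R B)) {x : R}
    (hx : (1 : B) ⊗ₜ[R] KaehlerDifferential.D A R x = 0) :
    KaehlerDifferential.D A R x ∈ RingHom.ker (algebraMap R B) • (⊤ : Submodule R Ω[R⁄A]) := by
  let e : (R ⧸ RingHom.ker (algebraMap R B)) ≃ₗ[R] B :=
    (Algebra.linearMap R B).quotKerEquivOfSurjective hRB
  have he : e 1 = 1 := map_one (algebraMap R B)
  rw [← LinearMap.ker_tensorProductMk, LinearMap.mem_ker, TensorProduct.mk_apply,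
    ← (e.rTensor _).map_eq_zero_iff, LinearEquiv.rTensor_tmul, he, hx]

theorem derivation_eq_zero_of_tmul_eq_zero (hRB : Function.Surjective (algebraMap R B)) {x : R}
    (hx : (1 : B) ⊗ₜ[R] KaehlerDifferential.D A R x = 0) {N : Type*} [AddCommGroup N] [Module R N]
    [Module A N] [IsScalarTower A R N]
    (hN : ∀ r, algebraMap R B r = 0 → ∀ n : N, r • n = 0) (D : Derivation A R N) : D x = 0 := by
  have h := Submodule.mem_map_of_mem (f := D.liftKaehlerDifferential)
    (kaehlerDifferential_D_mem_smul_top hRB hx)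
  rw [Submodule.map_smul''] at h
  rw [← D.liftKaehlerDifferential_comp_D]
  refine Submodule.smul_induction_on h (fun r hr n _ ↦ hN r hr n) fun a b ha hb ↦ ?_
  rw [ha, hb, add_zero]

theorem algHom_eq_of_tmul_eq_zero (hRB : Function.Surjective (algebraMap R B)) {x : R}
    (hx : (1 : B) ⊗ₜ[R] KaehlerDifferential.D A R x = 0) {E : Type*} [CommRing E] [Algebra A E]
    {I : Ideal E} (hI : I ^ 2 = ⊥) {f g : R →ₐ[A] E} (hfg : ∀ r, f r - g r ∈ I)
    (hg : ∀ r, algebraMap R B r = 0 → g r ∈ I) : f x = g x := by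
  let _ := g.toAlgebra
  have : IsScalarTower A R E := .of_algebraMap_eq fun a ↦ (g.commutes a).symm
  let D : Derivation A R I := derivationToSquareZeroOfLift I hI f
    (AlgHom.ext fun r ↦ Ideal.Quotient.eq.2 (hfg r))
  have hD : D x = 0 := derivation_eq_zero_of_tmul_eq_zero hRB hx (fun r hr n ↦ by
    have := Ideal.mul_mem_mul (hg r hr) n.2
    rw [← pow_two, hI] at this
    exact Subtype.ext this) D
  exact sub_eq_zero.1 (congrArg Subtype.val hD)

variable {S : Type*} [CommRing S] [Algebra A S] [Algebra S B]

theorem algHom_mem_ker_pow_two_of_tmul_eq_zero [Algebra A B] [IsScalarTower A R B]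
    (hRB : Function.Surjective (algebraMap R B)) {x : R} (hx0 : algebraMap R B x = 0)
    (hx : (1 : B) ⊗ₜ[R] KaehlerDifferential.D A R x = 0) {f : R →ₐ[A] S}
    (hf : ∀ r, algebraMap S B (f r) = algebraMap R B r)
    (hI : ∀ x ∈ RingHom.ker (algebraMap S B), (∀ D : Derivation A S B, D x = 0) →
      x ∈ RingHom.ker (algebraMap S B) ^ 2) :
    f x ∈ RingHom.ker (algebraMap S B) ^ 2 := by
  refine hI _ ((hf x).trans hx0) fun D ↦ ?_
  let _ : Algebra R S := f.toAlgebra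
  have : IsScalarTower A R S := .of_algebraMap_eq fun a ↦ (f.commutes a).symm
  have : IsScalarTower R S B := .of_algebraMap_eq fun r ↦ (hf r).symm
  exact derivation_eq_zero_of_tmul_eq_zero hRB hx (fun r hr b ↦ by
    rw [Algebra.smul_def, hr, zero_mul]) (D.compAlgebraMap R)

theorem exists_finset_forall_mem_ker_pow_two {y : S}
    (hy : y ∈ RingHom.ker (algebraMap S B) ^ 2) :
    ∃ F : Finset S, ∀ S' : Subalgebra A S, ↑F ⊆ (S' : Set S) → ∀ z : S', (z : S) = y →
      z ∈ RingHom.ker (algebraMap S' B) ^ 2 := by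
  classical
  rw [pow_two] at hy
  refine Submodule.mul_induction_on hy (fun a ha b hb ↦ ⟨{a, b}, fun S' hF z hz ↦ ?_⟩) ?_
  · simp only [Finset.coe_insert, Finset.coe_singleton, Set.insert_subset_iff,
      Set.singleton_subset_iff] at hF
    have hz' : z = ⟨a, hF.1⟩ * ⟨b, hF.2⟩ := Subtype.ext hz
    rw [hz', pow_two]
    exact Ideal.mul_mem_mul ha hb
  · rintro a b ⟨F, hF⟩ ⟨G, hG⟩
    refine ⟨insert a (F ∪ G), fun S' hS z hz ↦ ?_⟩
    simp only [Finset.coe_insert, Finset.coe_union, Set.insert_subset_iff, Set.union_subset_iff]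
      at hS
    have hzb : (z - ⟨a, hS.1⟩ : S') = b := by simp [hz]
    rw [← add_sub_cancel ⟨a, hS.1⟩ z]
    exact add_mem (hF S' hS.2.1 _ rfl) (hG S' hS.2.2 _ hzb)

variable [Algebra A B] [IsScalarTower A S B] {σ E : Type*} [CommRing E] [Algebra A E]

theorem exists_algHom_eq_zero_of_mem_ker_pow_two
    (hS : ∀ F : Finset S, ∃ S' : Subalgebra A S, Algebra.FormallySmooth A S' ∧ ∀ s ∈ F, s ∈ S')
    {g : E →ₐ[A] B} (hg : Function.Surjective g) (hg2 : RingHom.ker g ^ 2 = ⊥)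
    (q : MvPolynomial σ A →ₐ[A] E) {f : MvPolynomial σ A →ₐ[A] S}
    (hf : ∀ p, algebraMap S B (f p) = g (q p)) {x : MvPolynomial σ A}
    (hx : f x ∈ RingHom.ker (algebraMap S B) ^ 2) :
    ∃ h : MvPolynomial σ A →ₐ[A] E, (∀ p, g (h p) = g (q p)) ∧ h x = 0 := by
  classical
  obtain ⟨F, hF⟩ := exists_finset_forall_mem_ker_pow_two (A := A) hx
  obtain ⟨S', hS', hFS'⟩ := hS (F ∪ x.vars.image fun i ↦ f (.X i))
  have hg2' : IsNilpotent (RingHom.ker g) := ⟨2, hg2⟩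
  let β : S' →ₐ[A] E := Algebra.FormallySmooth.liftOfSurjective (IsScalarTower.toAlgHom A S' B) g
    hg hg2'
  have hβ (s : S') : g (β s) = algebraMap S B s :=
    Algebra.FormallySmooth.liftOfSurjective_apply _ g hg hg2' s
  let f' : MvPolynomial σ A →ₐ[A] S' :=
    MvPolynomial.aeval fun i ↦ if hi : f (.X i) ∈ S' then ⟨_, hi⟩ else 0
  have hvars {i : σ} (hi : i ∈ x.vars) : f (.X i) ∈ S' :=
    hFS' _ (Finset.mem_union_right _ (Finset.mem_image_of_mem _ hi))
  have hf' {i : σ} (hi : f (.X i) ∈ S') : (f' (.X i) : S) = f (.X i) := by simp [f', hi]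
  have hf'x : (f' x : S) = f x :=
    mvPolynomial_algHom_congr_vars (f := S'.val.comp f') fun i hi ↦ hf' (hvars hi)
  let h : MvPolynomial σ A →ₐ[A] E :=
    MvPolynomial.aeval fun i ↦ if f (.X i) ∈ S' then β (f' (.X i)) else q (.X i)
  have hhx : h x = β (f' x) :=
    mvPolynomial_algHom_congr_vars (g := β.comp f') fun i hi ↦ by simp [h, hvars hi]
  refine ⟨h, fun p ↦ DFunLike.congr_fun (MvPolynomial.algHom_ext (f := g.comp h) (g := g.comp q)
    fun i ↦ ?_) p, ?_⟩
  · by_cases hi : f (.X i) ∈ S'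
    · simp only [AlgHom.comp_apply, h, MvPolynomial.aeval_X, if_pos hi, hβ, ← hf]
      exact congrArg (algebraMap S B) (hf' hi)
    · simp [h, hi]
  · have hle : RingHom.ker (algebraMap S' B) ≤ (RingHom.ker g).comap β := fun s hs ↦
      (hβ s).trans hs
    have hmem : β (f' x) ∈ RingHom.ker g ^ 2 := Ideal.le_comap_pow _ 2 (Ideal.pow_right_mono hle 2
      (hF S' (fun s hs ↦ hFS' s (Finset.mem_union_left _ hs)) _ hf'x))
    rw [hhx]
    rwa [hg2] at hmem

theorem subsingleton_h1Cotangent_of_surjective (hSB : Function.Surjective (algebraMap S B))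
    (hS : ∀ F : Finset S, ∃ S' : Subalgebra A S, Algebra.FormallySmooth A S' ∧ ∀ s ∈ F, s ∈ S')
    (hI : ∀ x ∈ RingHom.ker (algebraMap S B), (∀ D : Derivation A S B, D x = 0) →
      x ∈ RingHom.ker (algebraMap S B) ^ 2) :
    Subsingleton (Algebra.H1Cotangent A B) := by
  let R := MvPolynomial B A
  let _ : Algebra R B := (MvPolynomial.aeval id : R →ₐ[A] B).toAlgebra
  have : IsScalarTower A R B := .of_algebraMap_eq fun a ↦ (MvPolynomial.aeval_C id a).symm
  have hX (b : B) : algebraMap R B (.X b) = b := MvPolynomial.aeval_X id b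
  have hRB : Function.Surjective (algebraMap R B) := fun b ↦ ⟨.X b, hX b⟩
  rw [← Algebra.FormallySmooth.kerCotangentToTensor_injective_iff (P := R) hRB,
    injective_iff_map_eq_zero]
  intro y hy
  obtain ⟨⟨x, hxJ⟩, rfl⟩ := Ideal.toCotangent_surjective _ y
  rw [KaehlerDifferential.kerCotangentToTensor_toCotangent] at hy
  rw [Ideal.toCotangent_eq_zero]
  change x ∈ _
  let J := RingHom.ker (algebraMap R B)
  choose s hs using hSB
  let f : R →ₐ[A] S := MvPolynomial.aeval fun b ↦ s b
  have hf (p : R) : algebraMap S B (f p) = algebraMap R B p :=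
    DFunLike.congr_fun (MvPolynomial.algHom_ext (f := (IsScalarTower.toAlgHom A S B).comp f)
      (g := IsScalarTower.toAlgHom A R B) fun b ↦
        (congrArg _ (MvPolynomial.aeval_X _ b)).trans ((hs b).trans (hX b).symm)) p
  have hfx : f x ∈ RingHom.ker (algebraMap S B) ^ 2 :=
    algHom_mem_ker_pow_two_of_tmul_eq_zero hRB hxJ hy hf hI
  let g : R ⧸ J ^ 2 →ₐ[A] B := IsScalarTower.toAlgHom A _ B
  have hg2 : RingHom.ker g ^ 2 = ⊥ := by
    have hg : RingHom.ker g = J.cotangentIdeal := AlgHom.ker_kerSquareLift (Algebra.ofId R B)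
    rw [hg, J.cotangentIdeal_square]
  obtain ⟨h, hgh, hhx⟩ := exists_algHom_eq_zero_of_mem_ker_pow_two hS (g := g)
    (fun b ↦ ⟨Ideal.Quotient.mk _ (.X b), hX b⟩) hg2 (Ideal.Quotient.mkₐ A (J ^ 2)) hf hfx
  rw [← Ideal.Quotient.eq_zero_iff_mem, ← hhx]
  refine algHom_eq_of_tmul_eq_zero (f := Ideal.Quotient.mkₐ A (J ^ 2)) hRB hy hg2
    (fun p ↦ ?_) fun p hp ↦ (hgh p).trans hp
  rw [RingHom.mem_ker, map_sub, hgh, sub_self]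

end Descent

open Polynomial

/-- The group of formal products `∏ p ^ k_p` of nonzero polynomials over `K`, written additively. -/
abbrev FormalProduct (K : Type*) [Field K] := {p : K[X] // p ≠ 0} →₀ ℤ

namespace FormalProduct

/-- The formal product consisting of a single nonzero polynomial. -/
abbrev of {K : Type*} [Field K] (p : {p : K[X] // p ≠ 0}) : FormalProduct K := Finsupp.single p 1

section Eval

variable {K : Type*} [Field K] (L : Type*) [Field L] [Algebra K[X] L]

/-- The value in `L` of a formal product. -/
def evalProd (l : FormalProduct K) : L := l.prod fun p k => algebraMap K[X] L p ^ k

@[simp]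
theorem evalProd_zero : evalProd L (0 : FormalProduct K) = 1 := Finsupp.prod_zero_index

theorem evalProd_single (p : {p : K[X] // p ≠ 0}) (k : ℤ) :
    evalProd L (Finsupp.single p k) = algebraMap K[X] L p ^ k :=
  Finsupp.prod_single_index (zpow_zero _)

theorem evalProd_of (p : {p : K[X] // p ≠ 0}) : evalProd L (of p) = algebraMap K[X] L p := by
  rw [evalProd_single, zpow_one]

variable [FaithfulSMul K[X] L]

theorem algebraMap_ne_zero (p : {p : K[X] // p ≠ 0}) : algebraMap K[X] L p ≠ 0 :=
  (map_ne_zero_iff _ (FaithfulSMul.algebraMap_injective K[X] L)).2 p.2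

theorem evalProd_ne_zero (l : FormalProduct K) : evalProd L l ≠ 0 :=
  Finset.prod_ne_zero_iff.2 fun p _ => zpow_ne_zero _ (algebraMap_ne_zero L p)

theorem evalProd_add (l l' : FormalProduct K) :
    evalProd L (l + l') = evalProd L l * evalProd L l' :=
  Finsupp.prod_add_index' (fun _ => zpow_zero _) fun p => zpow_add₀ (algebraMap_ne_zero L p)

theorem evalProd_neg (l : FormalProduct K) : evalProd L (-l) = (evalProd L l)⁻¹ :=
  eq_inv_of_mul_eq_one_left (by rw [← evalProd_add, neg_add_cancel, evalProd_zero])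

theorem evalProd_sub (l l' : FormalProduct K) :
    evalProd L (l - l') = evalProd L l / evalProd L l' := by
  rw [sub_eq_add_neg, evalProd_add, evalProd_neg, div_eq_mul_inv]

theorem evalProd_nsmul (n : ℕ) (l : FormalProduct K) : evalProd L (n • l) = evalProd L l ^ n := by
  induction n with
  | zero => rw [zero_nsmul, evalProd_zero, pow_zero]
  | succ n ih => rw [succ_nsmul, evalProd_add, ih, pow_succ]

end Eval

theorem exists_evalProd_eq {K L : Type*} [Field K] [Field L] [Algebra K[X] L]
    [IsFractionRing K[X] L] {b : L} (hb : b ≠ 0) : ∃ l : FormalProduct K, evalProd L l = b := by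
  obtain ⟨p, q, hq, rfl⟩ := IsFractionRing.div_surjective (A := K[X]) b
  have hp : p ≠ 0 := by rintro rfl; simp at hb
  exact ⟨of ⟨p, hp⟩ - of ⟨q, nonZeroDivisors.ne_zero hq⟩, by
    rw [evalProd_sub, evalProd_of, evalProd_of]⟩

section Integral

variable {K L : Type*} [Field K] [Field L] [Algebra K[X] L] [FaithfulSMul K[X] L]

variable (K) in
/-- The formal products whose value lies in the valuation ring `B`. -/
def integral (B : ValuationSubring L) : AddSubmonoid (FormalProduct K) where
  carrier := {l | evalProd L l ∈ B}
  zero_mem' := by rw [Set.mem_ofPred_eq, evalProd_zero]; exact one_mem B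
  add_mem' := fun {l l'} hl hl' => by
    rw [Set.mem_ofPred_eq, evalProd_add]; exact mul_mem hl hl'

variable {B : ValuationSubring L}

theorem mem_integral {l : FormalProduct K} : l ∈ integral K B ↔ evalProd L l ∈ B := Iff.rfl

theorem mem_or_neg_mem_integral (l : FormalProduct K) :
    l ∈ integral K B ∨ -l ∈ integral K B := by
  simpa only [mem_integral, evalProd_neg] using B.mem_or_inv_mem (evalProd L l)

theorem sub_mem_or_sub_mem_integral (l l' : FormalProduct K) :
    l - l' ∈ integral K B ∨ l' - l ∈ integral K B := by
  simpa only [neg_sub] using mem_or_neg_mem_integral (l - l')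

end Integral

end FormalProduct

open FormalProduct

/-- The monoid algebra over `A` of the formal products whose value lies in `B`: the free
presentation of `B` as an `A`-algebra in which all relations among products are built in. -/
abbrev IntegralAlgebra (K A : Type*) {L : Type*} [Field K] [CommRing A] [Field L] [Algebra K[X] L]
    [FaithfulSMul K[X] L] (B : ValuationSubring L) :=
  AddMonoidAlgebra A (integral K B)

namespace IntegralAlgebra

section Basic

variable {K A L : Type*} [Field K] [CommRing A] [Field L] [Algebra K[X] L] [FaithfulSMul K[X] L]

section Mono

variable (A) (B : ValuationSubring L)

open Classical in
/-- The monomial of a formal product, with junk value `0` if its value is not in `B`. -/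
def mono (l : FormalProduct K) : IntegralAlgebra K A B :=
  if h : l ∈ integral K B then AddMonoidAlgebra.single ⟨l, h⟩ 1 else 0

end Mono

variable {B : ValuationSubring L}

theorem mono_of_mem {l : FormalProduct K} (hl : l ∈ integral K B) :
    mono A B l = AddMonoidAlgebra.single ⟨l, hl⟩ 1 := dif_pos hl

theorem mono_of_notMem {l : FormalProduct K} (hl : l ∉ integral K B) : mono A B l = 0 := dif_neg hl

theorem mono_zero : mono A B (0 : FormalProduct K) = 1 := mono_of_mem (zero_mem _)

theorem mono_add {l l' : FormalProduct K} (hl : l ∈ integral K B) (hl' : l' ∈ integral K B) :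
    mono A B (l + l') = mono A B l * mono A B l' := by
  rw [mono_of_mem hl, mono_of_mem hl', mono_of_mem (add_mem hl hl'),
    AddMonoidAlgebra.single_mul_single, mul_one]
  rfl

theorem mono_eq_mul {l l' : FormalProduct K} (hl : l ∈ integral K B)
    (hl' : l' - l ∈ integral K B) : mono A B l' = mono A B l * mono A B (l' - l) := by
  rw [← mono_add hl hl', add_sub_cancel]

/-- The span of the monomials of a set of formal products. -/
def monoSpan (A : Type*) [CommRing A] (B : ValuationSubring L) (Q : Set (FormalProduct K)) :
    Submodule A (IntegralAlgebra K A B) :=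
  Submodule.span A (mono A B '' Q)

theorem mono_mem_monoSpan {Q : Set (FormalProduct K)} {l : FormalProduct K} (hl : l ∈ Q) :
    mono A B l ∈ monoSpan A B Q :=
  Submodule.subset_span ⟨l, hl, rfl⟩

theorem monoSpan_mono {Q Q' : Set (FormalProduct K)} (h : Q ⊆ Q') :
    monoSpan A B Q ≤ monoSpan A B Q' :=
  Submodule.span_mono (Set.image_mono h)

@[elab_as_elim]
theorem monoSpan_induction {Q : Set (FormalProduct K)}
    {p : (x : IntegralAlgebra K A B) → x ∈ monoSpan A B Q → Prop}
    (mono : ∀ (l) (hl : l ∈ Q), l ∈ integral K B → p (mono A B l) (mono_mem_monoSpan hl))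
    (zero : p 0 (zero_mem _))
    (add : ∀ x y hx hy, p x hx → p y hy → p (x + y) (add_mem hx hy))
    (smul : ∀ (a : A) x hx, p x hx → p (a • x) (Submodule.smul_mem _ a hx))
    {x : IntegralAlgebra K A B} (hx : x ∈ monoSpan A B Q) : p x hx := by
  induction hx using Submodule.span_induction with
  | mem _ h =>
    obtain ⟨l, hl, rfl⟩ := h
    by_cases hlB : l ∈ integral K B
    · exact mono l hl hlB
    · simpa only [mono_of_notMem hlB] using zero
  | zero => exact zero
  | add x y hx hy hpx hpy => exact add x y hx hy hpx hpy
  | smul a x hx hpx => exact smul a x hx hpx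

theorem mem_monoSpan_univ (x : IntegralAlgebra K A B) : x ∈ monoSpan A B Set.univ := by
  induction x using AddMonoidAlgebra.induction_linear with
  | zero => exact zero_mem _
  | add x y hx hy => exact add_mem hx hy
  | single l a =>
    have : AddMonoidAlgebra.single l a = a • mono A B (l : FormalProduct K) := by
      rw [mono_of_mem l.2, AddMonoidAlgebra.smul_single, smul_eq_mul, mul_one]
    exact this ▸ Submodule.smul_mem _ a (mono_mem_monoSpan (Set.mem_univ _))

theorem mul_mem_monoSpan {Q Q' Q'' : Set (FormalProduct K)} (hQ : ∀ l ∈ Q, ∀ l' ∈ Q', l + l' ∈ Q'')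
    {x y : IntegralAlgebra K A B} (hx : x ∈ monoSpan A B Q) (hy : y ∈ monoSpan A B Q') :
    x * y ∈ monoSpan A B Q'' := by
  induction hx using monoSpan_induction with
  | mono l hl hlB =>
    induction hy using monoSpan_induction with
    | mono l' hl' hlB' =>
      rw [← mono_add hlB hlB']
      exact mono_mem_monoSpan (hQ l hl l' hl')
    | zero => rw [mul_zero]; exact zero_mem _
    | add y z _ _ hy hz => rw [mul_add]; exact add_mem hy hz
    | smul a y _ hy => rw [mul_smul_comm]; exact Submodule.smul_mem _ a hy
  | zero => rw [zero_mul]; exact zero_mem _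
  | add x z _ _ hx hz => rw [add_mul]; exact add_mem hx hz
  | smul a x _ hx => rw [smul_mul_assoc]; exact Submodule.smul_mem _ a hx

/-- The subalgebra generated by the monomials in the polynomials of `U`. -/
def monomialSubalgebra (A : Type*) [CommRing A] (B : ValuationSubring L)
    (U : Set {p : K[X] // p ≠ 0}) : Subalgebra A (IntegralAlgebra K A B) :=
  (monoSpan A B (Finsupp.supported ℤ ℤ U)).toSubalgebra
    (by rw [← mono_zero]; exact mono_mem_monoSpan (zero_mem _))
    (fun _ _ hx hy => by
      refine mul_mem_monoSpan (fun l hl l' hl' => ?_) hx hy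
      exact add_mem hl hl')

variable {U V : Set {p : K[X] // p ≠ 0}}

theorem mem_monomialSubalgebra {x : IntegralAlgebra K A B} :
    x ∈ monomialSubalgebra A B U ↔ x ∈ monoSpan A B (Finsupp.supported ℤ ℤ U) := Iff.rfl

theorem mono_mem_monomialSubalgebra {l : FormalProduct K} (hl : l ∈ Finsupp.supported ℤ ℤ U) :
    mono A B l ∈ monomialSubalgebra A B U :=
  mono_mem_monoSpan hl

theorem monomialSubalgebra_mono (h : U ⊆ V) : monomialSubalgebra A B U ≤ monomialSubalgebra A B V :=
  fun _ hx => monoSpan_mono (Finsupp.supported_mono h) hx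

theorem mem_monomialSubalgebra_univ (x : IntegralAlgebra K A B) :
    x ∈ monomialSubalgebra A B (Set.univ : Set {p : K[X] // p ≠ 0}) := by
  simpa only [mem_monomialSubalgebra, Finsupp.supported_univ] using! mem_monoSpan_univ x

section Union

variable {ι : Type*} [Nonempty ι] {U : ι → Set {p : K[X] // p ≠ 0}} (hU : Directed (· ⊆ ·) U)
include hU

theorem mem_supported_iUnion_of_directed {l : FormalProduct K} :
    l ∈ Finsupp.supported ℤ ℤ (⋃ i, U i) ↔ ∃ i, l ∈ Finsupp.supported ℤ ℤ (U i) := by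
  rw [Finsupp.supported_iUnion]
  exact Submodule.mem_iSup_of_directed _ (.mono_comp _ (fun _ _ h => Finsupp.supported_mono h) hU)

theorem mem_monomialSubalgebra_iUnion_of_directed {x : IntegralAlgebra K A B} :
    x ∈ monomialSubalgebra A B (⋃ i, U i) ↔ ∃ i, x ∈ monomialSubalgebra A B (U i) := by
  have hset : (Finsupp.supported ℤ ℤ (⋃ i, U i) : Set (FormalProduct K)) =
      ⋃ i, (Finsupp.supported ℤ ℤ (U i) : Set (FormalProduct K)) := by
    ext l
    simp only [SetLike.mem_coe, mem_supported_iUnion_of_directed hU, Set.mem_iUnion]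
  simp only [mem_monomialSubalgebra, hset, monoSpan, Set.image_iUnion, Submodule.span_iUnion]
  exact Submodule.mem_iSup_of_directed _
    (.mono_comp _ (fun _ _ h => monoSpan_mono (Finsupp.supported_mono h)) hU)

end Union

end Basic

section Value

variable {K L : Type*} [Field K] [Field L] [Algebra K[X] L] [FaithfulSMul K[X] L]
  {B : ValuationSubring L} {A : Type*} [CommRing A] [Algebra A B]

/-- The homomorphism evaluating monomials. -/
def value : IntegralAlgebra K A B →ₐ[A] B :=
  AddMonoidAlgebra.lift A B (integral K B)
    { toFun := fun l => ⟨evalProd L (l.toAdd : FormalProduct K), l.toAdd.2⟩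
      map_one' := Subtype.ext (evalProd_zero (K := K) L)
      map_mul' := fun _ _ => Subtype.ext (evalProd_add (K := K) L _ _) }

theorem value_single (l : integral K B) (a : A) :
    value (AddMonoidAlgebra.single l a) = a • (⟨evalProd L (l : FormalProduct K), l.2⟩ : B) :=
  AddMonoidAlgebra.lift_single _ _ _

theorem value_mono {l : FormalProduct K} (hl : l ∈ integral K B) :
    value (mono A B l) = ⟨evalProd L l, hl⟩ := by
  rw [mono_of_mem hl, value_single, one_smul]

theorem coe_value_mono {l : FormalProduct K} (hl : l ∈ integral K B) :
    (value (mono A B l) : L) = evalProd L l := by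
  rw [value_mono hl]

theorem value_surjective {K L : Type*} [Field K] [Field L] [Algebra K[X] L] [IsFractionRing K[X] L]
    {B : ValuationSubring L} {A : Type*} [CommRing A] [Algebra A B] :
    Function.Surjective (value : IntegralAlgebra K A B →ₐ[A] B) := by
  intro b
  rcases eq_or_ne b 0 with rfl | hb
  · exact ⟨0, map_zero _⟩
  obtain ⟨l, hl⟩ := exists_evalProd_eq (K := K) (b := (b : L)) (by simpa using hb)
  have hlB : l ∈ integral K B := mem_integral.2 (hl ▸ b.2)
  exact ⟨mono A B l, Subtype.ext ((coe_value_mono hlB).trans hl)⟩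

instance algebraValuationSubring : Algebra (IntegralAlgebra K A B) B :=
  value.toAlgebra

theorem algebraMap_eq_value (x : IntegralAlgebra K A B) :
    algebraMap (IntegralAlgebra K A B) B x = value x := rfl

instance isScalarTower_valuationSubring : IsScalarTower A (IntegralAlgebra K A B) B :=
  .of_algebraMap_eq fun a => (value.commutes a).symm

end Value

section LogDeriv

variable {K L A : Type*} [Field K] [Field L] [Algebra K[X] L] [FaithfulSMul K[X] L]
  {B : ValuationSubring L} [CommRing A] [Algebra A B]

variable (A B) in
/-- The linear map underlying `logDeriv`. -/
def logDerivLinear (g : FormalProduct K →+ ℤ) : IntegralAlgebra K A B →ₗ[A] B :=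
  Finsupp.linearCombination A
    (fun l : integral K B => g l • (⟨evalProd L (l : FormalProduct K), l.2⟩ : B)) ∘ₗ
      (AddMonoidAlgebra.coeffLinearEquiv A).toLinearMap

theorem logDerivLinear_single (g : FormalProduct K →+ ℤ) (l : integral K B) (a : A) :
    logDerivLinear A B g (AddMonoidAlgebra.single l a) =
      g l • value (AddMonoidAlgebra.single l a) := by
  rw [value_single, smul_comm]
  exact Finsupp.linearCombination_single A a l

theorem logDerivLinear_mul (g : FormalProduct K →+ ℤ) (x y : IntegralAlgebra K A B) :
    logDerivLinear A B g (x * y) =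
      x • logDerivLinear A B g y + y • logDerivLinear A B g x := by
  induction x using AddMonoidAlgebra.induction_linear with
  | zero => simp only [zero_mul, map_zero, zero_smul, smul_zero, add_zero]
  | add x z hx hz => rw [add_mul, map_add, map_add, hx, hz, add_smul, smul_add]; abel
  | single l a =>
    induction y using AddMonoidAlgebra.induction_linear with
    | zero => simp only [mul_zero, map_zero, zero_smul, smul_zero, add_zero]
    | add y z hy hz => rw [mul_add, map_add, map_add, hy, hz, add_smul, smul_add]; abel
    | single l' a' =>
      rw [AddMonoidAlgebra.single_mul_single]
      simp only [Algebra.smul_def (A := B) (_ : IntegralAlgebra K A B), algebraMap_eq_value,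
        logDerivLinear_single]
      rw [← AddMonoidAlgebra.single_mul_single, map_mul, AddSubmonoid.coe_add, map_add, add_smul,
        mul_smul_comm, mul_smul_comm, add_comm, mul_comm (value (AddMonoidAlgebra.single l' a'))]

variable (A B) in
/-- The logarithmic derivation attached to an additive weight `g`: it sends the monomial of `l` to
`g l` times its value. -/
def logDeriv (g : FormalProduct K →+ ℤ) : Derivation A (IntegralAlgebra K A B) B :=
  Derivation.mk' (logDerivLinear A B g) (logDerivLinear_mul g)

theorem logDeriv_mono (g : FormalProduct K →+ ℤ) {l : FormalProduct K} (hl : l ∈ integral K B) :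
    logDeriv A B g (mono A B l) = g l • value (mono A B l) := by
  rw [mono_of_mem hl]
  exact logDerivLinear_single g ⟨l, hl⟩ 1

end LogDeriv

section Relations

variable {K L : Type*} [Field K] [Field L] [Algebra K[X] L] [FaithfulSMul K[X] L]
  (A : Type*) [CommRing A] (B : ValuationSubring L) [Algebra A B]

/-- The ideal generated by the relations that only involve the polynomials of `U`. -/
def relationIdeal (U : Set {p : K[X] // p ≠ 0}) : Ideal (IntegralAlgebra K A B) :=
  Ideal.span {x | x ∈ monomialSubalgebra A B U ∧ value x = 0}

/-- The formal products, possibly involving polynomials outside `U`, whose value is also the value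
of an element of `monomialSubalgebra A B U`. -/
def attained (U : Set {p : K[X] // p ≠ 0}) : AddSubmonoid (FormalProduct K) where
  carrier := {l | ∃ x ∈ monomialSubalgebra A B U, (value x : L) = evalProd L l}
  zero_mem' := ⟨1, one_mem _, by rw [map_one, evalProd_zero, OneMemClass.coe_one]⟩
  add_mem' := by
    rintro l l' ⟨x, hx, hxl⟩ ⟨y, hy, hyl⟩
    exact ⟨x * y, mul_mem hx hy, by rw [map_mul, MulMemClass.coe_mul, hxl, hyl, evalProd_add]⟩

/-- Whenever a product `g * g'` agrees, up to polynomials of `U`, with the value of an element of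
`monomialSubalgebra A B U`, so do the factors, compatibly. -/
def SplitsProducts (U : Set {p : K[X] // p ≠ 0}) : Prop :=
  ∀ g g' : {p : K[X] // p ≠ 0}, ∀ ν ∈ Finsupp.supported ℤ ℤ U, of g + of g' + ν ∈ attained A B U →
    ∃ μ ∈ Finsupp.supported ℤ ℤ U,
      of g + μ ∈ attained A B U ∧ of g' + (ν - μ) ∈ attained A B U

/-- The relations on the polynomials of `U` killed by all derivations are quadratic. -/
def DerivationsDetectSq (U : Set {p : K[X] // p ≠ 0}) : Prop :=
  ∀ x ∈ relationIdeal A B U, (∀ D : Derivation A (IntegralAlgebra K A B) B, D x = 0) →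
    x ∈ RingHom.ker (algebraMap (IntegralAlgebra K A B) B) ^ 2

variable {A B} {U V : Set {p : K[X] // p ≠ 0}}

theorem mem_attained {l : FormalProduct K} :
    l ∈ attained A B U ↔ ∃ x ∈ monomialSubalgebra A B U, (value x : L) = evalProd L l := Iff.rfl

theorem mem_relationIdeal_of_mem {x : IntegralAlgebra K A B} (hx : x ∈ monomialSubalgebra A B U)
    (hx0 : value x = 0) : x ∈ relationIdeal A B U :=
  Ideal.subset_span ⟨hx, hx0⟩

theorem relationIdeal_mono (h : U ⊆ V) : relationIdeal A B U ≤ relationIdeal A B V :=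
  Ideal.span_mono fun _ hx => ⟨monomialSubalgebra_mono h hx.1, hx.2⟩

theorem attained_mono (h : U ⊆ V) : attained A B U ≤ attained A B V := by
  rintro l ⟨x, hx, hxl⟩
  exact ⟨x, monomialSubalgebra_mono h hx, hxl⟩

theorem integral_of_mem_attained {l : FormalProduct K} (hl : l ∈ attained A B U) :
    l ∈ integral K B := by
  obtain ⟨x, -, hxl⟩ := hl
  exact mem_integral.2 (hxl ▸ (value x).2)

theorem mem_attained_of_mem_supported {l : FormalProduct K} (hl : l ∈ integral K B)
    (hlU : l ∈ Finsupp.supported ℤ ℤ U) : l ∈ attained A B U :=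
  ⟨mono A B l, mono_mem_monomialSubalgebra hlU, coe_value_mono hl⟩

theorem mem_relationIdeal_univ {x : IntegralAlgebra K A B} (hx : value x = 0) :
    x ∈ relationIdeal A B (Set.univ : Set {p : K[X] // p ≠ 0}) :=
  mem_relationIdeal_of_mem (mem_monomialSubalgebra_univ x) hx

section Union

variable {ι : Type*} [Nonempty ι] {U : ι → Set {p : K[X] // p ≠ 0}} (hU : Directed (· ⊆ ·) U)
include hU

theorem mem_relationIdeal_iUnion_of_directed {x : IntegralAlgebra K A B} :
    x ∈ relationIdeal A B (⋃ i, U i) ↔ ∃ i, x ∈ relationIdeal A B (U i) := by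
  have hset : {x | x ∈ monomialSubalgebra A B (⋃ i, U i) ∧ value x = 0} =
      ⋃ i, {x | x ∈ monomialSubalgebra A B (U i) ∧ value x = 0} := by
    ext x
    simp only [mem_monomialSubalgebra_iUnion_of_directed hU, Set.mem_iUnion, Set.mem_ofPred_eq,
      exists_and_right]
  simp only [relationIdeal, hset, Ideal.span_iUnion]
  exact Submodule.mem_iSup_of_directed _ (.mono_comp _ (fun _ _ h => relationIdeal_mono h) hU)

theorem SplitsProducts.iUnion_of_directed (h : ∀ i, SplitsProducts A B (U i)) :
    SplitsProducts A B (⋃ i, U i) := by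
  rintro g g' ν hν ⟨x, hx, hxl⟩
  obtain ⟨i, hi⟩ := (mem_supported_iUnion_of_directed hU).1 hν
  obtain ⟨j, hj⟩ := (mem_monomialSubalgebra_iUnion_of_directed hU).1 hx
  obtain ⟨k, hik, hjk⟩ := hU i j
  obtain ⟨μ, hμ, h₁, h₂⟩ := h k g g' ν (Finsupp.supported_mono hik hi)
    ⟨x, monomialSubalgebra_mono hjk hj, hxl⟩
  have hk : U k ⊆ ⋃ i, U i := Set.subset_iUnion U k
  exact ⟨μ, Finsupp.supported_mono hk hμ, attained_mono hk h₁, attained_mono hk h₂⟩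

theorem DerivationsDetectSq.iUnion_of_directed (h : ∀ i, DerivationsDetectSq A B (U i)) :
    DerivationsDetectSq A B (⋃ i, U i) := by
  intro x hx hD
  obtain ⟨i, hi⟩ := (mem_relationIdeal_iUnion_of_directed hU).1 hx
  exact h i x hi hD

end Union

end Relations

end IntegralAlgebra

theorem zsmul_mem_of_mem_of_neg_mem {M : Type*} [AddGroup M] {P : AddSubmonoid M} {x : M}
    (hx : x ∈ P) (hx' : -x ∈ P) (j : ℤ) : j • x ∈ P := by
  obtain ⟨n, rfl | rfl⟩ := j.eq_nat_or_neg
  · rw [natCast_zsmul]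
    exact nsmul_mem hx n
  · rw [neg_zsmul, natCast_zsmul, ← neg_nsmul]
    exact nsmul_mem hx' n

theorem exists_sub_mul_mem_of_mem_sup_span {S : Type*} [CommRing S] {I : Ideal S} {R : Set S}
    (hR : ∀ r ∈ R, ∀ r' ∈ R, (∃ t, r - t * r' ∈ I) ∨ ∃ t, r' - t * r ∈ I) {x : S}
    (hx : x ∈ I ⊔ Ideal.span R) : x ∈ I ∨ ∃ r ∈ R, ∃ t, x - t * r ∈ I := by
  obtain ⟨i, hi, y, hy, rfl⟩ := Submodule.mem_sup.1 hx
  suffices y ∈ I ∨ ∃ r ∈ R, ∃ t, y - t * r ∈ I by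
    rcases this with hyI | ⟨r, hr, t, ht⟩
    · exact .inl (add_mem hi hyI)
    · exact .inr ⟨r, hr, t, by simpa only [add_sub_assoc] using add_mem hi ht⟩
  clear hx
  induction hy using Submodule.span_induction with
  | mem r hr => exact .inr ⟨r, hr, 1, by rw [one_mul, sub_self]; exact zero_mem _⟩
  | zero => exact .inl (zero_mem _)
  | smul c y _ hy =>
    rcases hy with hyI | ⟨r, hr, t, ht⟩
    · exact .inl (I.mul_mem_left c hyI)
    · exact .inr ⟨r, hr, c * t, by
        simpa only [smul_eq_mul, mul_sub, mul_assoc] using I.mul_mem_left c ht⟩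
  | add y z _ _ hy hz =>
    have absorb : ∀ {r r' t t' u : S}, r - u * r' ∈ I → y - t * r ∈ I → z - t' * r' ∈ I →
        y + z - (t * u + t') * r' ∈ I := fun {r r' t t' u} hu ht ht' => by
      convert add_mem (add_mem ht ht') (I.mul_mem_left t hu) using 1
      ring
    rcases hy with hyI | ⟨r, hr, t, ht⟩ <;> rcases hz with hzI | ⟨r', hr', t', ht'⟩
    · exact .inl (add_mem hyI hzI)
    · exact .inr ⟨r', hr', t', by simpa only [add_sub_assoc] using add_mem hyI ht'⟩
    · exact .inr ⟨r, hr, t, by simpa only [add_sub_right_comm] using add_mem ht hzI⟩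
    · rcases hR r hr r' hr' with ⟨u, hu⟩ | ⟨u, hu⟩
      · exact .inr ⟨r', hr', _, absorb hu ht ht'⟩
      · refine .inr ⟨r, hr, t' * u + t, ?_⟩
        convert add_mem (add_mem ht ht') (I.mul_mem_left t' hu) using 1
        ring

namespace FormalProduct

section Supported

variable {K : Type*} [Field K] {U : Set {p : K[X] // p ≠ 0}} {f : {p : K[X] // p ≠ 0}}
  {l : FormalProduct K}

theorem apply_eq_zero_of_mem_supported (hf : f ∉ U) (hl : l ∈ Finsupp.supported ℤ ℤ U) :
    l f = 0 :=
  (Finsupp.mem_supported' ℤ l).1 hl f hf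

theorem mem_supported_of_mem_insert (hl : l ∈ Finsupp.supported ℤ ℤ (insert f U)) (h : l f = 0) :
    l ∈ Finsupp.supported ℤ ℤ U := by
  refine (Finsupp.mem_supported' ℤ l).2 fun p hp => ?_
  by_cases hpf : p = f
  · rwa [hpf]
  · exact (Finsupp.mem_supported' ℤ l).1 hl p fun h => h.elim hpf hp

theorem mem_supported_insert (hl : l ∈ Finsupp.supported ℤ ℤ U) :
    l ∈ Finsupp.supported ℤ ℤ (insert f U) :=
  Finsupp.supported_mono (Set.subset_insert f U) hl

theorem single_mem_supported_insert (k : ℤ) :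
    Finsupp.single f k ∈ Finsupp.supported ℤ ℤ (insert f U) :=
  Finsupp.single_mem_supported ℤ k (Set.mem_insert f U)

variable {L : Type*} [Field L] [Algebra K[X] L]

theorem exists_algebraMap_eq_evalProd (hl : 0 ≤ l) :
    ∃ Y : K[X], algebraMap K[X] L Y = evalProd L l := by
  refine ⟨l.prod fun p k => (p : K[X]) ^ k.toNat, ?_⟩
  rw [map_finsuppProd]
  refine Finset.prod_congr rfl fun p _ => ?_
  simp only [map_pow, ← zpow_natCast, Int.toNat_of_nonneg (hl p)]

end Supported

end FormalProduct

namespace IntegralAlgebra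

section Filtration

variable {K L : Type*} [Field K] [Field L] [Algebra K[X] L] [FaithfulSMul K[X] L]
  {B : ValuationSubring L} {A : Type*} [CommRing A] {U : Set {p : K[X] // p ≠ 0}}
  {f : {p : K[X] // p ≠ 0}}

theorem eq_zero_or_exists_eq_mono_mul {Q : Set (FormalProduct K)}
    (hQ : ∀ l ∈ Q, ∀ l' ∈ Q, l - l' ∈ Finsupp.supported ℤ ℤ U) {x : IntegralAlgebra K A B}
    (hx : x ∈ monoSpan A B Q) :
    x = 0 ∨ ∃ l ∈ Q, l ∈ integral K B ∧ ∃ y ∈ monomialSubalgebra A B U, x = mono A B l * y := by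
  induction hx using monoSpan_induction with
  | mono l hl hlB => exact .inr ⟨l, hl, hlB, 1, one_mem _, (mul_one _).symm⟩
  | zero => exact .inl rfl
  | smul a x _ hx =>
    rcases hx with rfl | ⟨l, hl, hlB, y, hy, rfl⟩
    · exact .inl (smul_zero a)
    · exact .inr ⟨l, hl, hlB, a • y, Subalgebra.smul_mem _ hy a, (mul_smul_comm a _ y).symm⟩
  | add x x' _ _ hx hx' =>
    have merge : ∀ {l l' : FormalProduct K} {y y' : IntegralAlgebra K A B}, l ∈ Q → l' ∈ Q →
        l ∈ integral K B → l' - l ∈ integral K B → y ∈ monomialSubalgebra A B U →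
        y' ∈ monomialSubalgebra A B U → ∃ z ∈ monomialSubalgebra A B U,
          mono A B l * y + mono A B l' * y' = mono A B l * z := by
      intro l l' y y' hl hl' hlB hsub hy hy'
      refine ⟨y + mono A B (l' - l) * y', add_mem hy
        (mul_mem (mono_mem_monomialSubalgebra (hQ l' hl' l hl)) hy'), ?_⟩
      rw [mono_eq_mul hlB hsub]
      ring
    rcases hx with rfl | ⟨l, hl, hlB, y, hy, rfl⟩
    · simpa only [zero_add] using hx'
    rcases hx' with rfl | ⟨l', hl', hlB', y', hy', rfl⟩
    · exact .inr ⟨l, hl, hlB, y, hy, add_zero _⟩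
    right
    rcases sub_mem_or_sub_mem_integral (B := B) l' l with h | h
    · obtain ⟨z, hz, hz'⟩ := merge hl hl' hlB h hy hy'
      exact ⟨l, hl, hlB, z, hz, hz'⟩
    · obtain ⟨z, hz, hz'⟩ := merge hl' hl hlB' h hy' hy
      exact ⟨l', hl', hlB', z, hz, (add_comm _ _).trans hz'⟩

/-- The formal products involving `f` and `U` whose exponent at `f` lies between `k` and `m`. -/
def degreeBand (U : Set {p : K[X] // p ≠ 0}) (f : {p : K[X] // p ≠ 0}) (k m : ℤ) :
    Set (FormalProduct K) :=
  {l | l ∈ Finsupp.supported ℤ ℤ (insert f U) ∧ l f ∈ Set.Icc k m}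

theorem degreeBand_mono {k k' m m' : ℤ} (hk : k' ≤ k) (hm : m ≤ m') :
    degreeBand U f k m ⊆ degreeBand U f k' m' :=
  fun _ hl => ⟨hl.1, Set.Icc_subset_Icc hk hm hl.2⟩

theorem exists_mem_monoSpan_degreeBand {x : IntegralAlgebra K A B}
    (hx : x ∈ monomialSubalgebra A B (insert f U)) :
    ∃ (k : ℤ) (n : ℕ), x ∈ monoSpan A B (degreeBand U f k (k + n)) := by
  induction hx using monoSpan_induction with
  | mono l hl _ => exact ⟨l f, 0, mono_mem_monoSpan ⟨hl, le_rfl, by simp⟩⟩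
  | zero => exact ⟨0, 0, zero_mem _⟩
  | add x y _ _ hx hy =>
    obtain ⟨k, n, hx⟩ := hx
    obtain ⟨k', n', hy⟩ := hy
    exact ⟨min k k', (max (k + n) (k' + n') - min k k').toNat,
      add_mem (monoSpan_mono (degreeBand_mono (by lia) (by lia)) hx)
        (monoSpan_mono (degreeBand_mono (by lia) (by lia)) hy)⟩
  | smul a x _ hx =>
    obtain ⟨k, n, hx⟩ := hx
    exact ⟨k, n, Submodule.smul_mem _ a hx⟩

theorem exists_add_of_mem_monoSpan_degreeBand {k m : ℤ} {x : IntegralAlgebra K A B}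
    (hx : x ∈ monoSpan A B (degreeBand U f k m)) :
    ∃ y ∈ monoSpan A B (degreeBand U f k k),
      ∃ z ∈ monoSpan A B (degreeBand U f (k + 1) m), y + z = x := by
  have hband : degreeBand U f k m ⊆ degreeBand U f k k ∪ degreeBand U f (k + 1) m := by
    rintro l ⟨hl, hk, hm⟩
    rcases hk.eq_or_lt with h | h
    · exact .inl ⟨hl, hk, h.ge⟩
    · exact .inr ⟨hl, h, hm⟩
  have hx' := monoSpan_mono hband hx
  rw [monoSpan, Set.image_union, Submodule.span_union] at hx'
  exact Submodule.mem_sup.1 hx'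

theorem degreeBand_self_sub_mem {k : ℤ} {l l' : FormalProduct K} (hl : l ∈ degreeBand U f k k)
    (hl' : l' ∈ degreeBand U f k k) : l - l' ∈ Finsupp.supported ℤ ℤ U := by
  refine mem_supported_of_mem_insert (sub_mem hl.1 hl'.1) ?_
  rw [Finsupp.sub_apply, le_antisymm hl.2.2 hl.2.1, le_antisymm hl'.2.2 hl'.2.1, sub_self]

theorem exists_evalProd_mul_evalProd_eq {k m : ℤ} {l : FormalProduct K}
    (hl : l ∈ degreeBand U f k m) :
    ∃ μ ∈ Finsupp.supported ℤ ℤ U, 0 ≤ μ ∧ ∃ Y : K[X],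
      evalProd L l * evalProd L μ = evalProd L (Finsupp.single f k) * algebraMap K[X] L Y := by
  obtain ⟨hl, hk, -⟩ := hl
  set l₀ := l - Finsupp.single f k
  have hneg : l₀⁻ ∈ Finsupp.supported ℤ ℤ U := by
    refine (Finsupp.mem_supported' ℤ _).2 fun p hp => ?_
    rw [negPart_def, Finsupp.sup_apply, Finsupp.neg_apply, Finsupp.coe_zero, Pi.zero_apply,
      sup_eq_right, neg_nonpos, Finsupp.sub_apply]
    by_cases hpf : p = f
    · rw [hpf, Finsupp.single_eq_same]
      exact sub_nonneg.2 hk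
    · rw [(Finsupp.mem_supported' ℤ l).1 hl p fun h => h.elim hpf hp,
        Finsupp.single_eq_of_ne hpf, sub_self]
  obtain ⟨Y, hY⟩ := exists_algebraMap_eq_evalProd (L := L) (posPart_nonneg l₀)
  refine ⟨l₀⁻, hneg, negPart_nonneg l₀, Y, ?_⟩
  have hsplit : l + l₀⁻ = Finsupp.single f k + l₀⁺ := by
    rw [add_comm _ l₀⁺, ← sub_eq_sub_iff_add_eq_add, posPart_sub_negPart]
  rw [hY, ← evalProd_add, ← evalProd_add, hsplit]

section Denominators

variable [Algebra A B] [Algebra A K[X]] [Algebra A L] [IsScalarTower A K[X] L]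
  [IsScalarTower A B L]

theorem coe_value_smul (a : A) (x : IntegralAlgebra K A B) :
    (value (a • x) : L) = algebraMap K[X] L (algebraMap A K[X] a) * value x := by
  rw [map_smul, Algebra.smul_def, MulMemClass.coe_mul, ← IsScalarTower.algebraMap_apply A K[X] L,
    IsScalarTower.algebraMap_apply A B L]
  rfl

theorem exists_value_mul_evalProd_eq {k m : ℤ} {x : IntegralAlgebra K A B}
    (hx : x ∈ monoSpan A B (degreeBand U f k m)) :
    ∃ μ ∈ Finsupp.supported ℤ ℤ U, 0 ≤ μ ∧ ∃ Y : K[X],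
      (value x : L) * evalProd L μ = evalProd L (Finsupp.single f k) * algebraMap K[X] L Y := by
  induction hx using monoSpan_induction with
  | mono l hl hlB =>
    rw [coe_value_mono hlB]
    exact exists_evalProd_mul_evalProd_eq hl
  | zero => exact ⟨0, zero_mem _, le_rfl, 0, by simp⟩
  | add x y _ _ hx hy =>
    obtain ⟨μ, hμ, hμ0, Y, hY⟩ := hx
    obtain ⟨μ', hμ', hμ0', Y', hY'⟩ := hy
    obtain ⟨M, hM⟩ := exists_algebraMap_eq_evalProd (L := L) hμ0
    obtain ⟨M', hM'⟩ := exists_algebraMap_eq_evalProd (L := L) hμ0'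
    refine ⟨μ + μ', add_mem hμ hμ', add_nonneg hμ0 hμ0', Y * M' + Y' * M, ?_⟩
    rw [map_add, AddMemClass.coe_add, evalProd_add, map_add, map_mul, map_mul, hM, hM']
    linear_combination (evalProd L μ') * hY + (evalProd L μ) * hY'
  | smul a x _ hx =>
    obtain ⟨μ, hμ, hμ0, Y, hY⟩ := hx
    refine ⟨μ, hμ, hμ0, algebraMap A K[X] a * Y, ?_⟩
    rw [coe_value_smul, map_mul, mul_assoc, hY, mul_left_comm]

end Denominators

end Filtration

section LinearRelations

variable {K L : Type*} [Field K] [Field L] [Algebra K[X] L] [FaithfulSMul K[X] L]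
  {A : Type*} [CommRing A] {B : ValuationSubring L} [Algebra A B]
  {U : Set {p : K[X] // p ≠ 0}} {f : {p : K[X] // p ≠ 0}}

variable (A B U f) in
/-- The relations expressing a monomial of degree one in `f` through the polynomials of `U`. -/
def linearRelations : Set (IntegralAlgebra K A B) :=
  {r | ∃ d ∈ Finsupp.supported ℤ ℤ U, ∃ σ ∈ monomialSubalgebra A B U,
    (value σ : L) = evalProd L (of f + d) ∧ r = mono A B (of f + d) - σ}

theorem value_eq_zero_of_mem_linearRelations {r : IntegralAlgebra K A B}
    (hr : r ∈ linearRelations A B U f) : value r = 0 := by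
  obtain ⟨d, -, σ, hσ, hσd, rfl⟩ := hr
  have hd := integral_of_mem_attained ⟨σ, hσ, hσd⟩
  rw [map_sub, sub_eq_zero, Subtype.ext_iff, coe_value_mono hd, hσd]

theorem exists_sub_mul_mem_relationIdeal {r r' : IntegralAlgebra K A B}
    (hr : r ∈ linearRelations A B U f) (hr' : r' ∈ linearRelations A B U f) :
    (∃ t, r - t * r' ∈ relationIdeal A B U) ∨ ∃ t, r' - t * r ∈ relationIdeal A B U := by
  have reduce : ∀ {d d' : FormalProduct K} {σ σ' : IntegralAlgebra K A B},
      d ∈ Finsupp.supported ℤ ℤ U → d' ∈ Finsupp.supported ℤ ℤ U →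
      σ ∈ monomialSubalgebra A B U → σ' ∈ monomialSubalgebra A B U →
      (value σ : L) = evalProd L (of f + d) → (value σ' : L) = evalProd L (of f + d') →
      d - d' ∈ integral K B →
      ∃ t, mono A B (of f + d) - σ - t * (mono A B (of f + d') - σ') ∈ relationIdeal A B U := by
    intro d d' σ σ' hd hd' hσ hσ' hσd hσd' h
    have hlin : mono A B (of f + d) = mono A B (of f + d') * mono A B (d - d') := by
      have hsub : of f + d - (of f + d') = d - d' := add_sub_add_left_eq_sub d d' (of f)
      rw [mono_eq_mul (integral_of_mem_attained ⟨σ', hσ', hσd'⟩) (hsub ▸ h), hsub]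
    refine ⟨mono A B (d - d'), ?_⟩
    have hrw : mono A B (of f + d) - σ - mono A B (d - d') * (mono A B (of f + d') - σ') =
        mono A B (d - d') * σ' - σ := by
      rw [hlin]
      ring
    rw [hrw]
    refine mem_relationIdeal_of_mem
      (sub_mem (mul_mem (mono_mem_monomialSubalgebra (sub_mem hd hd')) hσ') hσ) ?_
    rw [map_sub, map_mul, sub_eq_zero, Subtype.ext_iff, MulMemClass.coe_mul, coe_value_mono h,
      hσd, hσd', ← evalProd_add]
    congr 1
    abel
  obtain ⟨d, hd, σ, hσ, hσd, rfl⟩ := hr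
  obtain ⟨d', hd', σ', hσ', hσd', rfl⟩ := hr'
  exact (sub_mem_or_sub_mem_integral d d').imp (reduce hd hd' hσ hσ' hσd hσd')
    (reduce hd' hd hσ' hσ hσd' hσd)

theorem mem_relationIdeal_of_mem_monoSpan_degreeBand_self {k : ℤ} {x : IntegralAlgebra K A B}
    (hx : x ∈ monoSpan A B (degreeBand U f k k)) (hx0 : value x = 0) :
    x ∈ relationIdeal A B U := by
  rcases eq_zero_or_exists_eq_mono_mul (fun _ hl _ hl' => degreeBand_self_sub_mem hl hl') hx with
    rfl | ⟨l, -, hlB, s, hs, rfl⟩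
  · exact zero_mem _
  refine Ideal.mul_mem_left _ _ (mem_relationIdeal_of_mem hs ?_)
  rw [map_mul, value_mono hlB] at hx0
  exact (mul_eq_zero.1 hx0).resolve_left fun h =>
    evalProd_ne_zero L l (congrArg Subtype.val h)

theorem value_eq_zero_of_mem_relationIdeal {x : IntegralAlgebra K A B}
    (hx : x ∈ relationIdeal A B U) : value x = 0 :=
  (Ideal.span_le.2 fun _ hx => hx.2 : relationIdeal A B U ≤ RingHom.ker value) hx

theorem value_eq_zero_of_mem_sup_span {x : IntegralAlgebra K A B}
    (hx : x ∈ relationIdeal A B U ⊔ Ideal.span (linearRelations A B U f)) : value x = 0 := by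
  suffices relationIdeal A B U ⊔ Ideal.span (linearRelations A B U f) ≤ RingHom.ker value from
    this hx
  exact sup_le (fun _ => value_eq_zero_of_mem_relationIdeal)
    (Ideal.span_le.2 fun _ => value_eq_zero_of_mem_linearRelations)

section Generation

variable [Algebra A K[X]] [Algebra A L] [IsScalarTower A K[X] L] [IsScalarTower A B L]

/-- The lowest coefficient of a relation in `f` is divisible by `f` up to units, hence splits. -/
theorem exists_linearRelation_of_value_add_eq_zero (hU : SplitsProducts A B U) {k m : ℤ}
    {l : FormalProduct K} (hl : l ∈ degreeBand U f k k) (hlB : l ∈ integral K B)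
    {s z : IntegralAlgebra K A B} (hs : s ∈ monomialSubalgebra A B U)
    (hz : z ∈ monoSpan A B (degreeBand U f (k + 1) m)) (hs0 : value s ≠ 0)
    (h : value (mono A B l * s + z) = 0) :
    ∃ d ∈ Finsupp.supported ℤ ℤ U, ∃ σ ∈ monomialSubalgebra A B U,
      (value σ : L) = evalProd L (of f + d) ∧
        ∃ τ ∈ monomialSubalgebra A B U, value s = value σ * value τ := by
  obtain ⟨μ, hμ, -, Y, hY⟩ := exists_value_mul_evalProd_eq hz
  have hsum : evalProd L l * value s + value z = 0 := by
    simpa only [map_add, map_mul, AddMemClass.coe_add, MulMemClass.coe_mul, coe_value_mono hlB,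
      ZeroMemClass.coe_zero] using congrArg (Subtype.val) h
  have hs0' : (value s : L) ≠ 0 := by simpa only [ne_eq, ZeroMemClass.coe_eq_zero] using hs0
  set ν : FormalProduct K := Finsupp.single f k - l - μ
  have hν : ν ∈ Finsupp.supported ℤ ℤ U :=
    sub_mem (degreeBand_self_sub_mem
      ⟨single_mem_supported_insert k, by simp⟩ hl) hμ
  have hval : (value s : L) = evalProd L (of f) * algebraMap K[X] L (-Y) * evalProd L ν := by
    have hne := evalProd_ne_zero L l
    have hne' := evalProd_ne_zero L μ
    have hsingle : evalProd L (Finsupp.single f (k + 1)) =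
        evalProd L (of f) * evalProd L (Finsupp.single f k) := by
      rw [← evalProd_add, ← Finsupp.single_add, add_comm]
    rw [hsingle] at hY
    rw [evalProd_sub, evalProd_sub, map_neg]
    field_simp
    linear_combination evalProd L μ * hsum - hY
  have hY0 : -Y ≠ 0 := by
    rintro hY0
    rw [hval, hY0, map_zero, mul_zero, zero_mul] at hs0'
    exact hs0' rfl
  obtain ⟨d, hd, ⟨σ, hσ, hσd⟩, τ, hτ, hτd⟩ := hU f ⟨-Y, hY0⟩ ν hν
    ⟨s, hs, by rw [hval, evalProd_add, evalProd_add, evalProd_of _ ⟨-Y, hY0⟩]⟩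
  refine ⟨d, hd, σ, hσ, hσd, τ, hτ, Subtype.ext ?_⟩
  rw [MulMemClass.coe_mul, hσd, hτd, hval, ← evalProd_add, ← evalProd_of L ⟨-Y, hY0⟩,
    ← evalProd_add, ← evalProd_add]
  congr 1
  abel

theorem add_mem_degreeBand {k : ℤ} (hf : f ∉ U) {l d : FormalProduct K}
    (hl : l ∈ degreeBand U f k k) (hd : d ∈ Finsupp.supported ℤ ℤ U) :
    l + d ∈ degreeBand U f k k := by
  refine ⟨add_mem hl.1 (mem_supported_insert hd), ?_⟩
  rw [Finsupp.add_apply, apply_eq_zero_of_mem_supported hf hd, add_zero]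
  exact hl.2

theorem add_of_mem_degreeBand {k : ℤ} {l : FormalProduct K}
    (hl : l ∈ degreeBand U f k k) : l + of f ∈ degreeBand U f (k + 1) (k + 1) := by
  refine ⟨add_mem hl.1 (single_mem_supported_insert 1), ?_⟩
  rw [Finsupp.add_apply, Finsupp.single_eq_same]
  exact ⟨add_le_add_left hl.2.1 1, add_le_add_left hl.2.2 1⟩

theorem exists_degreeBand_succ_sub_mem (hf : f ∉ U) (hU : SplitsProducts A B U) {k m : ℤ}
    (hkm : k < m) {x : IntegralAlgebra K A B} (hx : x ∈ monoSpan A B (degreeBand U f k m))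
    (hx0 : value x = 0) :
    ∃ x' ∈ monoSpan A B (degreeBand U f (k + 1) m),
      x - x' ∈ relationIdeal A B U ⊔ Ideal.span (linearRelations A B U f) := by
  have mul_relation {l : FormalProduct K} {s : IntegralAlgebra K A B}
      (hs : s ∈ monomialSubalgebra A B U) (hs0 : value s = 0) :
      mono A B l * s ∈ relationIdeal A B U ⊔ Ideal.span (linearRelations A B U f) :=
    Ideal.mul_mem_left _ _ (Ideal.mem_sup_left (mem_relationIdeal_of_mem hs hs0))
  obtain ⟨y, hy, z, hz, rfl⟩ := exists_add_of_mem_monoSpan_degreeBand hx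
  rcases eq_zero_or_exists_eq_mono_mul (fun _ hl _ hl' => degreeBand_self_sub_mem hl hl') hy with
    rfl | ⟨l, hl, hlB, s, hs, rfl⟩
  · exact ⟨z, hz, by rw [zero_add, sub_self]; exact zero_mem _⟩
  by_cases hs0 : value s = 0
  · exact ⟨z, hz, by rw [add_sub_cancel_right]; exact mul_relation hs hs0⟩
  obtain ⟨d, hd, σ, hσ, hσd, τ, hτ, hsτ⟩ :=
    exists_linearRelation_of_value_add_eq_zero hU hl hlB hs hz hs0 hx0
  have hr : mono A B (of f + d) - σ ∈ linearRelations A B U f := ⟨d, hd, σ, hσ, hσd, rfl⟩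
  have hdB : of f + d ∈ integral K B := integral_of_mem_attained ⟨σ, hσ, hσd⟩
  have hband : mono A B (l + (of f + d)) * τ ∈ monoSpan A B (degreeBand U f (k + 1) m) := by
    have hlow : l + (of f + d) ∈ degreeBand U f (k + 1) (k + 1) := by
      rw [← add_assoc]
      exact add_mem_degreeBand hf (add_of_mem_degreeBand hl) hd
    exact monoSpan_mono (degreeBand_mono le_rfl hkm) (mul_mem_monoSpan
      (fun _ hu _ hu' => add_mem_degreeBand hf hu hu') (mono_mem_monoSpan hlow)
      (mem_monomialSubalgebra.1 hτ))
  refine ⟨mono A B (l + (of f + d)) * τ + z, add_mem hband hz, ?_⟩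
  have hsplit : mono A B l * s + z - (mono A B (l + (of f + d)) * τ + z) =
      mono A B l * (s - σ * τ) - mono A B l * τ * (mono A B (of f + d) - σ) := by
    rw [mono_add hlB hdB]
    ring
  have hsub : value (s - σ * τ) = 0 := by rw [map_sub, map_mul, hsτ, sub_self]
  rw [hsplit]
  exact sub_mem (mul_relation (sub_mem hs (mul_mem hσ hτ)) hsub)
    (Ideal.mul_mem_left _ _ (Ideal.mem_sup_right (Ideal.subset_span hr)))

theorem mem_relationIdeal_sup_span_linearRelations (hf : f ∉ U)
    (hU : SplitsProducts A B U) (n : ℕ) :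
    ∀ (k : ℤ) {x : IntegralAlgebra K A B}, x ∈ monoSpan A B (degreeBand U f k (k + n)) →
      value x = 0 → x ∈ relationIdeal A B U ⊔ Ideal.span (linearRelations A B U f) := by
  induction n with
  | zero =>
    intro k x hx hx0
    rw [Nat.cast_zero, add_zero] at hx
    exact Ideal.mem_sup_left (mem_relationIdeal_of_mem_monoSpan_degreeBand_self hx hx0)
  | succ n ih =>
    intro k x hx hx0
    obtain ⟨x', hx', hsub⟩ := exists_degreeBand_succ_sub_mem hf hU (by lia) hx hx0
    have hx'0 : value x' = 0 := by
      have h := value_eq_zero_of_mem_sup_span hsub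
      rwa [map_sub, hx0, zero_sub, neg_eq_zero] at h
    have htop : (k + (n + 1 : ℕ) : ℤ) = k + 1 + n := by push_cast; ring
    rw [htop] at hx'
    simpa only [sub_add_cancel] using add_mem hsub (ih _ hx' hx'0)

theorem mem_relationIdeal_or_exists_sub_mul_mem (hf : f ∉ U) (hU : SplitsProducts A B U)
    {x : IntegralAlgebra K A B} (hx : x ∈ relationIdeal A B (insert f U)) :
    x ∈ relationIdeal A B U ∨
      ∃ r ∈ linearRelations A B U f, ∃ t, x - t * r ∈ relationIdeal A B U := by
  refine exists_sub_mul_mem_of_mem_sup_span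
    (fun r hr r' hr' => exists_sub_mul_mem_relationIdeal hr hr') ?_
  refine Ideal.span_le.2 (fun y hy => ?_) hx
  obtain ⟨k, n, hband⟩ := exists_mem_monoSpan_degreeBand hy.1
  exact mem_relationIdeal_sup_span_linearRelations hf hU n k hband hy.2

end Generation

section Derivations

theorem smul_eq_zero_of_value_eq_zero {x : IntegralAlgebra K A B} (hx : value x = 0) (b : B) :
    x • b = 0 := by
  rw [Algebra.smul_def, algebraMap_eq_value, hx, zero_mul]

theorem logDeriv_apply_eq_zero_of_mem_monomialSubalgebra (hf : f ∉ U) {x : IntegralAlgebra K A B}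
    (hx : x ∈ monomialSubalgebra A B U) : logDeriv A B (Finsupp.applyAddHom f) x = 0 := by
  induction hx using monoSpan_induction with
  | mono l hl hlB =>
    rw [logDeriv_mono _ hlB, Finsupp.applyAddHom_apply, apply_eq_zero_of_mem_supported hf hl,
      zero_smul]
  | zero => exact map_zero _
  | add x y _ _ hx hy => rw [map_add, hx, hy, add_zero]
  | smul a x _ hx => rw [Derivation.map_smul, hx, smul_zero]

theorem logDeriv_apply_eq_zero_of_mem_relationIdeal (hf : f ∉ U) {x : IntegralAlgebra K A B}
    (hx : x ∈ relationIdeal A B U) : logDeriv A B (Finsupp.applyAddHom f) x = 0 := by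
  induction hx using Submodule.span_induction with
  | mem x hx => exact logDeriv_apply_eq_zero_of_mem_monomialSubalgebra hf hx.1
  | zero => exact map_zero _
  | add x y _ _ hx hy => rw [map_add, hx, hy, add_zero]
  | smul y x hx ih =>
    rw [smul_eq_mul, Derivation.leibniz, ih, smul_zero, zero_add,
      smul_eq_zero_of_value_eq_zero (value_eq_zero_of_mem_relationIdeal hx)]

theorem logDeriv_apply_ne_zero_of_mem_linearRelations (hf : f ∉ U) {r : IntegralAlgebra K A B}
    (hr : r ∈ linearRelations A B U f) : logDeriv A B (Finsupp.applyAddHom f) r ≠ 0 := by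
  obtain ⟨d, hd, σ, hσ, hσd, rfl⟩ := hr
  have hdB : of f + d ∈ integral K B := integral_of_mem_attained ⟨σ, hσ, hσd⟩
  rw [map_sub, logDeriv_apply_eq_zero_of_mem_monomialSubalgebra hf hσ, sub_zero,
    logDeriv_mono _ hdB, Finsupp.applyAddHom_apply, Finsupp.add_apply, Finsupp.single_eq_same,
    apply_eq_zero_of_mem_supported hf hd, add_zero, one_smul, Ne, ← ZeroMemClass.coe_eq_zero,
    coe_value_mono hdB]
  exact evalProd_ne_zero L _

theorem DerivationsDetectSq.insert [Algebra A K[X]] [Algebra A L] [IsScalarTower A K[X] L]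
    [IsScalarTower A B L] (hf : f ∉ U) (hG : SplitsProducts A B U)
    (hT : DerivationsDetectSq A B U) : DerivationsDetectSq A B (insert f U) := by
  intro x hx hD
  rcases mem_relationIdeal_or_exists_sub_mul_mem hf hG hx with hx | ⟨r, hr, t, hxt⟩
  · exact hT x hx hD
  have hr0 := value_eq_zero_of_mem_linearRelations hr
  have ht0 : value t = 0 := by
    have h := logDeriv_apply_eq_zero_of_mem_relationIdeal hf hxt
    rw [map_sub, hD, Derivation.leibniz, smul_eq_zero_of_value_eq_zero hr0, add_zero, zero_sub,
      neg_eq_zero, Algebra.smul_def, algebraMap_eq_value] at h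
    exact (mul_eq_zero.1 h).resolve_right (logDeriv_apply_ne_zero_of_mem_linearRelations hf hr)
  have htr : t * r ∈ RingHom.ker (algebraMap (IntegralAlgebra K A B) B) ^ 2 := by
    rw [sq]
    exact Ideal.mul_mem_mul ht0 hr0
  rw [← sub_add_cancel x (t * r)]
  refine add_mem (hT _ hxt fun D => ?_) htr
  rw [map_sub, hD, Derivation.leibniz, smul_eq_zero_of_value_eq_zero ht0,
    smul_eq_zero_of_value_eq_zero hr0, add_zero, sub_zero]

end Derivations

end LinearRelations

section UnitRelation

variable {K L : Type*} [Field K] [Field L] [Algebra K[X] L] [FaithfulSMul K[X] L]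
  {A : Type*} [CommRing A] {B : ValuationSubring L} [Algebra A B]
  {U : Set {p : K[X] // p ≠ 0}} {f : {p : K[X] // p ≠ 0}} {d : FormalProduct K}

theorem mem_attained_of_evalProd_eq {l l' : FormalProduct K} (h : evalProd L l = evalProd L l')
    (hl : l ∈ attained A B U) : l' ∈ attained A B U := by
  rwa [mem_attained, ← h]

theorem sub_zsmul_mem_supported (hf : f ∉ U) (hd : d ∈ Finsupp.supported ℤ ℤ U)
    {m : FormalProduct K} (hm : m ∈ Finsupp.supported ℤ ℤ (insert f U)) :
    m - m f • (of f + d) ∈ Finsupp.supported ℤ ℤ U := by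
  refine mem_supported_of_mem_insert (sub_mem hm (zsmul_mem
    (add_mem (single_mem_supported_insert 1) (mem_supported_insert hd)) _)) ?_
  rw [Finsupp.sub_apply, Finsupp.smul_apply, Finsupp.add_apply, Finsupp.single_eq_same,
    apply_eq_zero_of_mem_supported hf hd, add_zero, smul_eq_mul, mul_one, sub_self]

theorem exists_value_mul_pow_eq (hf : f ∉ U) (hd : d ∈ Finsupp.supported ℤ ℤ U)
    (hneg : -(of f + d) ∈ integral K B) {σ : IntegralAlgebra K A B}
    (hσ : σ ∈ monomialSubalgebra A B U) (hσd : (value σ : L) = evalProd L (of f + d))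
    {x : IntegralAlgebra K A B} (hx : x ∈ monomialSubalgebra A B (insert f U)) :
    ∃ N : ℕ, ∃ y ∈ monomialSubalgebra A B U, value (x * σ ^ N) = value y := by
  induction hx using monoSpan_induction with
  | mono m hm hmB =>
    have hdB : of f + d ∈ integral K B := integral_of_mem_attained ⟨σ, hσ, hσd⟩
    set m₀ := m - m f • (of f + d) with hm₀
    have hm₀B : m₀ ∈ integral K B := by
      rw [hm₀, sub_eq_add_neg, ← neg_zsmul]
      exact add_mem hmB (zsmul_mem_of_mem_of_neg_mem hdB hneg _)
    obtain ⟨j, hj⟩ := Int.eq_ofNat_of_zero_le (show 0 ≤ m f + (m f).natAbs by lia)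
    refine ⟨(m f).natAbs, mono A B m₀ * σ ^ j, mul_mem
      (mono_mem_monomialSubalgebra (sub_zsmul_mem_supported hf hd hm)) (pow_mem hσ j), ?_⟩
    refine Subtype.ext ?_
    simp only [map_mul, map_pow, MulMemClass.coe_mul, SubmonoidClass.coe_pow, coe_value_mono hmB,
      coe_value_mono hm₀B, hσd, ← evalProd_nsmul, ← evalProd_add]
    congr 1
    rw [← natCast_zsmul, ← natCast_zsmul, ← hj, add_smul, hm₀]
    abel
  | zero => exact ⟨0, 0, zero_mem _, by rw [zero_mul]⟩
  | add x x' _ _ hx hx' =>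
    obtain ⟨N, y, hy, h⟩ := hx
    obtain ⟨N', y', hy', h'⟩ := hx'
    refine ⟨N + N', y * σ ^ N' + y' * σ ^ N,
      add_mem (mul_mem hy (pow_mem hσ _)) (mul_mem hy' (pow_mem hσ _)), ?_⟩
    rw [map_add, map_mul _ y, map_mul _ y', ← h, ← h', ← map_mul, ← map_mul, ← map_add]
    congr 1
    ring
  | smul a x _ hx =>
    obtain ⟨N, y, hy, h⟩ := hx
    exact ⟨N, a • y, Subalgebra.smul_mem _ hy a, by rw [smul_mul_assoc, map_smul, map_smul, h]⟩

theorem exists_add_nsmul_mem_attained (hf : f ∉ U) (hd : d ∈ Finsupp.supported ℤ ℤ U)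
    (hdU : of f + d ∈ attained A B U) (hneg : -(of f + d) ∈ integral K B)
    {m : FormalProduct K} (hm : m ∈ attained A B (insert f U)) :
    ∃ N : ℕ, m + N • (of f + d) ∈ attained A B U := by
  obtain ⟨σ, hσ, hσd⟩ := hdU
  obtain ⟨x, hx, hxm⟩ := hm
  obtain ⟨N, y, hy, h⟩ := exists_value_mul_pow_eq hf hd hneg hσ hσd hx
  refine ⟨N, y, hy, ?_⟩
  rw [← h, map_mul, map_pow, MulMemClass.coe_mul, SubmonoidClass.coe_pow, hxm, hσd,
    evalProd_add L m, evalProd_nsmul]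

/-- Adjoining `f` amounts to inverting a value attained from `U`. -/
theorem SplitsProducts.insert_of_neg_mem_integral (hf : f ∉ U) (hU : SplitsProducts A B U)
    (hd : d ∈ Finsupp.supported ℤ ℤ U) (hdU : of f + d ∈ attained A B U)
    (hneg : -(of f + d) ∈ integral K B) : SplitsProducts A B (insert f U) := by
  intro g g' ν hν hgg'
  set l := of f + d with hl
  have hlU : l ∈ Finsupp.supported ℤ ℤ (insert f U) :=
    add_mem (single_mem_supported_insert 1) (mem_supported_insert hd)
  have hunit (j : ℤ) : j • l ∈ attained A B (insert f U) := mem_attained_of_mem_supported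
    (zsmul_mem_of_mem_of_neg_mem (integral_of_mem_attained hdU) hneg j) (zsmul_mem hlU j)
  set ν₁ := ν - ν f • l with hν₁
  have hν₁U : ν₁ ∈ Finsupp.supported ℤ ℤ U := sub_zsmul_mem_supported hf hd hν
  have hgg'ν₁ : of g + of g' + ν₁ ∈ attained A B (insert f U) := by
    have h := add_mem hgg' (hunit (-ν f))
    rwa [add_assoc, neg_zsmul, ← sub_eq_add_neg] at h
  obtain ⟨N, hN⟩ := exists_add_nsmul_mem_attained hf hd hdU hneg hgg'ν₁
  set fg : {p : K[X] // p ≠ 0} := ⟨f ^ N * g, mul_ne_zero (pow_ne_zero N f.2) g.2⟩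
  have hfg (x : FormalProduct K) : evalProd L (of fg + x) = evalProd L (N • of f + of g + x) := by
    simp only [evalProd_add, evalProd_nsmul, evalProd_of, fg, map_mul, map_pow]
  obtain ⟨μ, hμ, h₁, h₂⟩ := hU fg g' (ν₁ + N • d) (add_mem hν₁U (nsmul_mem hd N)) <| by
    refine mem_attained_of_evalProd_eq ?_ hN
    rw [add_assoc (of fg), hfg, nsmul_add]
    congr 1
    abel
  refine ⟨N • of f + μ, add_mem (nsmul_mem (single_mem_supported_insert 1) N)
    (mem_supported_insert hμ), attained_mono (Set.subset_insert f U)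
      (mem_attained_of_evalProd_eq ?_ h₁), ?_⟩
  · rw [hfg]
    congr 1
    abel
  · have h := add_mem (attained_mono (Set.subset_insert f U) h₂) (hunit (ν f - N))
    convert h using 1
    rw [hν₁, sub_smul, natCast_zsmul, hl, nsmul_add]
    abel

end UnitRelation

end IntegralAlgebra

theorem exists_eq_sum_range_mul_pow {K : Type*} [Field K] {f : K[X]} (hf : 0 < f.degree)
    (G : K[X]) :
    ∃ (N : ℕ) (c : ℕ → K[X]), (∀ k, (c k).degree < f.degree) ∧
      G = ∑ k ∈ Finset.range N, c k * f ^ k := by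
  induction G using degree_lt_wf.induction with
  | _ G ih =>
    rcases eq_or_ne G 0 with rfl | hG
    · exact ⟨0, 0, fun _ => degree_zero.trans_lt (bot_lt_of_lt hf), by simp⟩
    obtain ⟨N, c, hc, hsum⟩ := ih (G / f) (degree_div_lt hG hf)
    refine ⟨N + 1, fun k => k.casesOn (G % f) c, fun k => ?_, ?_⟩
    · cases k with
      | zero => exact degree_mod_lt G (ne_zero_of_degree_gt hf)
      | succ k => exact hc k
    · rw [Finset.sum_range_succ']
      simp only [pow_succ, pow_zero, mul_one, ← mul_assoc, ← Finset.sum_mul]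
      rw [← hsum, mul_comm]
      exact (EuclideanDomain.div_add_mod G f).symm

namespace IntegralAlgebra

section Residue

variable {K L : Type*} [Field K] [Field L] [Algebra K[X] L] [FaithfulSMul K[X] L]
  {A : Type*} [CommRing A] {B : ValuationSubring L} [Algebra A B]
  {U : Set {p : K[X] // p ≠ 0}} {f : {p : K[X] // p ≠ 0}}

open IsLocalRing

variable (A B) in
/-- The reduction of the evaluation modulo the maximal ideal, graded by an additive weight `g`. -/
def gradedResidue (g : FormalProduct K →+ ℤ) :
    IntegralAlgebra K A B →ₐ[A] AddMonoidAlgebra (ResidueField B) ℤ :=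
  AddMonoidAlgebra.lift A _ (integral K B) <|
    (AddMonoidAlgebra.of (ResidueField B) ℤ).comp (g.comp (integral K B).subtype).toMultiplicative *
      ((AddMonoidAlgebra.singleZeroRingHom.comp (residue B)).comp
        (value : IntegralAlgebra K A B →ₐ[A] B).toRingHom).toMonoidHom.comp
          (AddMonoidAlgebra.of A (integral K B))

theorem gradedResidue_mono (g : FormalProduct K →+ ℤ) {l : FormalProduct K}
    (hl : l ∈ integral K B) :
    gradedResidue A B g (mono A B l) = .single (g l) (residue B (value (mono A B l))) := by
  rw [mono_of_mem hl, gradedResidue, AddMonoidAlgebra.lift_single, one_smul]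
  refine (AddMonoidAlgebra.single_mul_single ..).trans ?_
  rw [add_zero, one_mul]
  rfl

theorem residue_value_mono_eq_zero {l : FormalProduct K} (hl : -l ∉ integral K B) :
    residue B (value (mono A B l)) = 0 := by
  have hl' : l ∈ integral K B := (mem_or_neg_mem_integral l).resolve_right hl
  rw [residue_eq_zero_iff, mem_maximalIdeal, mem_nonunits_iff]
  rintro ⟨u, hu⟩
  refine hl (mem_integral.2 ?_)
  have hinv : ((u : B) : L)⁻¹ = ((u⁻¹ : Bˣ) : B) :=
    inv_eq_of_mul_eq_one_right (congrArg Subtype.val u.mul_inv)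
  rw [evalProd_neg, ← coe_value_mono (A := A) hl', ← hu, hinv]
  exact Subtype.property _

theorem gradedResidue_mono_eq_zero (g : FormalProduct K →+ ℤ) {l : FormalProduct K}
    (hl : -l ∉ integral K B) : gradedResidue A B g (mono A B l) = 0 := by
  rw [gradedResidue_mono g ((mem_or_neg_mem_integral l).resolve_right hl),
    residue_value_mono_eq_zero hl, AddMonoidAlgebra.single_zero]

theorem gradedResidue_of_mem_monomialSubalgebra (hf : f ∉ U) {x : IntegralAlgebra K A B}
    (hx : x ∈ monomialSubalgebra A B U) :
    gradedResidue A B (Finsupp.applyAddHom f) x = .single 0 (residue B (value x)) := by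
  induction hx using monoSpan_induction with
  | mono l hl hlB =>
    rw [gradedResidue_mono _ hlB, Finsupp.applyAddHom_apply, apply_eq_zero_of_mem_supported hf hl]
  | zero => simp only [map_zero, AddMonoidAlgebra.single_zero]
  | add x y _ _ hx hy => simp only [map_add, hx, hy, AddMonoidAlgebra.single_add]
  | smul a x _ hx =>
    rw [map_smul, hx, map_smul, AddMonoidAlgebra.smul_single]
    rfl

theorem gradedResidue_eq_zero_of_mem_relationIdeal (hf : f ∉ U) {x : IntegralAlgebra K A B}
    (hx : x ∈ relationIdeal A B U) : gradedResidue A B (Finsupp.applyAddHom f) x = 0 := by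
  suffices relationIdeal A B U ≤ RingHom.ker (gradedResidue A B (Finsupp.applyAddHom f)) from
    this hx
  refine Ideal.span_le.2 fun y hy => ?_
  rw [SetLike.mem_coe, RingHom.mem_ker, gradedResidue_of_mem_monomialSubalgebra hf hy.1, hy.2,
    map_zero, AddMonoidAlgebra.single_zero]

theorem gradedResidue_eq_zero_of_mem_relationIdeal_insert [Algebra A K[X]] [Algebra A L]
    [IsScalarTower A K[X] L] [IsScalarTower A B L] (hf : f ∉ U) (hU : SplitsProducts A B U)
    (hneg : ∀ d ∈ Finsupp.supported ℤ ℤ U, of f + d ∈ attained A B U →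
      -(of f + d) ∉ integral K B)
    {x : IntegralAlgebra K A B} (hx : x ∈ relationIdeal A B (insert f U)) :
    gradedResidue A B (Finsupp.applyAddHom f) x = 0 := by
  rcases mem_relationIdeal_or_exists_sub_mul_mem hf hU hx with hx | ⟨r, hr, t, hxt⟩
  · exact gradedResidue_eq_zero_of_mem_relationIdeal hf hx
  have hr0 : gradedResidue A B (Finsupp.applyAddHom f) r = 0 := by
    have hval := value_eq_zero_of_mem_linearRelations hr
    obtain ⟨d, hd, σ, hσ, hσd, rfl⟩ := hr
    have hdneg := hneg d hd ⟨σ, hσ, hσd⟩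
    rw [map_sub, sub_eq_zero] at hval
    rw [map_sub, gradedResidue_mono_eq_zero _ hdneg, gradedResidue_of_mem_monomialSubalgebra hf hσ,
      ← hval, residue_value_mono_eq_zero hdneg, AddMonoidAlgebra.single_zero, sub_zero]
  rw [← sub_add_cancel x (t * r), map_add, map_mul, hr0, mul_zero, add_zero,
    gradedResidue_eq_zero_of_mem_relationIdeal hf hxt]

theorem exists_forall_sub_mem_integral {ι : Type*} {D : Finset ι} (hD : D.Nonempty)
    (m : ι → FormalProduct K) : ∃ i ∈ D, ∀ j ∈ D, m j - m i ∈ integral K B := by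
  obtain ⟨i, hi, hmax⟩ := D.exists_max_image (fun j => B.valuation (evalProd L (m j))) hD
  refine ⟨i, hi, fun j hj => mem_integral.2 ((B.valuation_le_one_iff _).1 ?_)⟩
  rw [evalProd_sub, map_div₀, div_le_one₀ (zero_lt_iff.2
    ((_root_.map_ne_zero _).2 (evalProd_ne_zero L (m i))))]
  exact hmax j hj

theorem gradedResidue_sum_ne_zero {ι : Type*} {D : Finset ι} {m : ι → FormalProduct K}
    {g : FormalProduct K →+ ℤ} (hg : ∀ i ∈ D, ∀ j ∈ D, g (m i) = g (m j) → i = j) {i : ι}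
    (hi : i ∈ D) (hmin : ∀ j ∈ D, m j - m i ∈ integral K B) :
    gradedResidue A B g (∑ j ∈ D, mono A B (m j - m i)) ≠ 0 := by
  intro h
  have hcoeff (j) (hj : j ∈ D) (hji : j ≠ i) :
      (gradedResidue A B g (mono A B (m j - m i))).coeff 0 = 0 := by
    rw [gradedResidue_mono g (hmin j hj), map_sub, AddMonoidAlgebra.coeff_single,
      Finsupp.single_eq_of_ne]
    exact fun h0 => hji (hg j hj i hi (sub_eq_zero.1 h0.symm))
  have h0 := congrArg (fun y => AddMonoidAlgebra.coeff y 0) h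
  simp only [map_sum, AddMonoidAlgebra.coeff_sum, Finsupp.finsetSum_apply] at h0
  rw [Finset.sum_eq_single_of_mem i hi hcoeff, sub_self, mono_zero, map_one,
    AddMonoidAlgebra.one_def, AddMonoidAlgebra.coeff_single, Finsupp.single_eq_same] at h0
  exact one_ne_zero h0

theorem exists_gradedResidue_ne_zero (hf : f ∉ U) (hdeg : 0 < (f : K[X]).degree)
    (hlow : ∀ p : {p : K[X] // p ≠ 0}, (p : K[X]).degree < (f : K[X]).degree → p ∈ U)
    (G : {p : K[X] // p ≠ 0}) :
    ∃ l ∈ Finsupp.supported ℤ ℤ (insert f U), ∃ s ∈ monomialSubalgebra A B (insert f U),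
      (value s : L) = evalProd L (of G - l) ∧
        gradedResidue A B (Finsupp.applyAddHom f) s ≠ 0 := by
  classical
  obtain ⟨N, c, hc, hG⟩ := exists_eq_sum_range_mul_pow hdeg (G : K[X])
  set D : Finset {k // c k ≠ 0} := (Finset.range N).subtype fun k => c k ≠ 0
  set m : {k // c k ≠ 0} → FormalProduct K := fun k => of ⟨c k, k.2⟩ + Finsupp.single f (k : ℤ)
  have hcU (k : {k // c k ≠ 0}) : of ⟨c k, k.2⟩ ∈ Finsupp.supported ℤ ℤ U :=
    Finsupp.single_mem_supported ℤ 1 (hlow ⟨c k, k.2⟩ (hc k))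
  have hmU (k) : m k ∈ Finsupp.supported ℤ ℤ (insert f U) :=
    add_mem (mem_supported_insert (hcU k)) (single_mem_supported_insert _)
  have hmf (k) : Finsupp.applyAddHom f (m k) = (k : ℤ) := by
    rw [Finsupp.applyAddHom_apply, Finsupp.add_apply, apply_eq_zero_of_mem_supported hf (hcU k),
      Finsupp.single_eq_same, zero_add]
  have hsum : ∑ k ∈ D, evalProd L (m k) = algebraMap K[X] L G := by
    rw [hG, map_sum, ← Finset.sum_filter_of_ne (p := fun k => c k ≠ 0),
      ← Finset.sum_subtype_eq_sum_filter]
    · refine Finset.sum_congr rfl fun k _ => ?_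
      rw [evalProd_add, evalProd_of, evalProd_single, zpow_natCast, map_mul, map_pow]
    · rintro k - hk hck
      rw [hck, zero_mul, map_zero] at hk
      exact hk rfl
  have hD : D.Nonempty := by
    rw [Finset.nonempty_iff_ne_empty]
    intro hD
    rw [hD, Finset.sum_empty] at hsum
    exact algebraMap_ne_zero L G hsum.symm
  obtain ⟨i, hi, hmin⟩ := exists_forall_sub_mem_integral (B := B) hD m
  refine ⟨m i, hmU i, ∑ j ∈ D, mono A B (m j - m i), sum_mem fun j _ =>
    mono_mem_monomialSubalgebra (sub_mem (hmU j) (hmU i)), ?_, gradedResidue_sum_ne_zero ?_ hi hmin⟩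
  · rw [evalProd_sub, evalProd_of, ← hsum, Finset.sum_div, map_sum, AddSubmonoidClass.coe_finsetSum]
    refine Finset.sum_congr rfl fun j hj => ?_
    rw [coe_value_mono (hmin j hj), evalProd_sub]
  · intro j _ k _ h
    rw [hmf, hmf, Nat.cast_inj] at h
    exact Subtype.ext h

theorem SplitsProducts.insert_of_neg_notMem_integral [Algebra A K[X]] [Algebra A L]
    [IsScalarTower A K[X] L] [IsScalarTower A B L] (hf : f ∉ U) (hdeg : 0 < (f : K[X]).degree)
    (hlow : ∀ p : {p : K[X] // p ≠ 0}, (p : K[X]).degree < (f : K[X]).degree → p ∈ U)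
    (hU : SplitsProducts A B U)
    (hneg : ∀ d ∈ Finsupp.supported ℤ ℤ U, of f + d ∈ attained A B U →
      -(of f + d) ∉ integral K B) : SplitsProducts A B (insert f U) := by
  rintro g g' ν hν ⟨x, hx, hxν⟩
  obtain ⟨l, hl, s, hs, hsl, hs0⟩ := exists_gradedResidue_ne_zero (A := A) (B := B) hf hdeg hlow g
  obtain ⟨l', hl', s', hs', hsl', hs0'⟩ :=
    exists_gradedResidue_ne_zero (A := A) (B := B) hf hdeg hlow g'
  by_cases hint : l + l' + ν ∈ integral K B
  · refine ⟨-l, neg_mem hl, ⟨s, hs, by rw [hsl, sub_eq_add_neg]⟩, ?_⟩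
    have h : of g' + (ν - -l) = (of g' - l') + (l + l' + ν) := by abel
    rw [h]
    exact add_mem ⟨s', hs', hsl'⟩
      (mem_attained_of_mem_supported hint (add_mem (add_mem hl hl') hν))
  · exfalso
    have hint' : -(l + l' + ν) ∈ integral K B := (mem_or_neg_mem_integral _).resolve_left hint
    have hrel : s * s' - mono A B (-(l + l' + ν)) * x ∈ relationIdeal A B (insert f U) := by
      refine mem_relationIdeal_of_mem (sub_mem (mul_mem hs hs') (mul_mem
        (mono_mem_monomialSubalgebra (neg_mem (add_mem (add_mem hl hl') hν))) hx)) ?_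
      rw [map_sub, sub_eq_zero, map_mul, map_mul, Subtype.ext_iff, MulMemClass.coe_mul,
        MulMemClass.coe_mul, hsl, hsl', coe_value_mono hint', hxν, ← evalProd_add, ← evalProd_add]
      congr 1
      abel
    have h := gradedResidue_eq_zero_of_mem_relationIdeal_insert hf hU hneg hrel
    rw [map_sub, map_mul, map_mul, gradedResidue_mono_eq_zero _ (by rwa [neg_neg]), zero_mul,
      sub_zero] at h
    exact mul_ne_zero hs0 hs0' h

theorem SplitsProducts.insert [Algebra A K[X]] [Algebra A L]
    [IsScalarTower A K[X] L] [IsScalarTower A B L] (hf : f ∉ U) (hdeg : 0 < (f : K[X]).degree)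
    (hlow : ∀ p : {p : K[X] // p ≠ 0}, (p : K[X]).degree < (f : K[X]).degree → p ∈ U)
    (hU : SplitsProducts A B U) : SplitsProducts A B (insert f U) := by
  by_cases h : ∃ d ∈ Finsupp.supported ℤ ℤ U, of f + d ∈ attained A B U ∧
      -(of f + d) ∈ integral K B
  · obtain ⟨d, hd, hdU, hneg⟩ := h
    exact hU.insert_of_neg_mem_integral hf hd hdU hneg
  · push Not at h
    exact hU.insert_of_neg_notMem_integral hf hdeg hlow h

end Residue

end IntegralAlgebra

theorem mem_ker_sq_of_forall_derivation_eq_zero {A S B ι : Type*} [CommRing A] [CommRing S]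
    [CommRing B] [NoZeroDivisors B] [Algebra A S] [Algebra A B] [Algebra S B] [Finite ι]
    {r : ι → S} (hr : ∀ i, algebraMap S B (r i) = 0) (D : ι → Derivation A S B)
    (hne : ∀ i, D i (r i) ≠ 0) (hij : ∀ i j, i ≠ j → D j (r i) = 0) {x : S}
    (hx : x ∈ Ideal.span (Set.range r)) (hD : ∀ j, D j x = 0) :
    x ∈ RingHom.ker (algebraMap S B) ^ 2 := by
  have := Fintype.ofFinite ι
  obtain ⟨t, rfl⟩ := Ideal.mem_span_range_iff_exists_fun.1 hx
  have ht (j) : algebraMap S B (t j) = 0 := by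
    have h := hD j
    rw [map_sum, Finset.sum_eq_single_of_mem j (Finset.mem_univ j)] at h
    · rw [Derivation.leibniz, algebra_compatible_smul B (r j), hr, zero_smul, add_zero,
        Algebra.smul_def] at h
      exact (mul_eq_zero.1 h).resolve_right (hne j)
    · intro i _ hi
      rw [Derivation.leibniz, algebra_compatible_smul B (r i), hr, zero_smul, add_zero, hij i j hi,
        smul_zero]
  rw [pow_two]
  exact sum_mem fun i _ => Ideal.mul_mem_mul (ht i) (hr i)

namespace FormalProduct

/-- The nonzero constant polynomials. -/
def constants (K : Type*) [Field K] : Set {p : K[X] // p ≠ 0} := {p | (p : K[X]).degree ≤ 0}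

variable {K L : Type*} [Field K] [Field L] [Algebra K[X] L]

theorem exists_algebraMap_eq_evalProd_of_constants [Algebra K L] [IsScalarTower K K[X] L]
    {l : FormalProduct K} (hl : l ∈ Finsupp.supported ℤ ℤ (constants K)) :
    ∃ c : K, algebraMap K L c = evalProd L l := by
  suffices evalProd L l ∈ (algebraMap K L).fieldRange from this
  refine prod_mem fun p hp => zpow_mem (RingHom.mem_fieldRange.2 ⟨(p : K[X]).coeff 0, ?_⟩) _
  rw [IsScalarTower.algebraMap_apply K K[X] L, algebraMap_eq,
    ← eq_C_of_degree_le_zero ((Finsupp.mem_supported ℤ l).1 hl hp)]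

theorem exists_dual_mem_closure [FaithfulSMul K[X] L] {B : ValuationSubring L}
    {U : Set {p : K[X] // p ≠ 0}} {F : Finset (FormalProduct K)}
    (hF : ∀ s ∈ F, s ∈ Finsupp.supported ℤ ℤ U) :
    ∃ (n : ℕ) (b : Fin n → FormalProduct K) (g : Fin n → FormalProduct K →+ ℤ),
      (∀ i, b i ∈ Finsupp.supported ℤ ℤ U) ∧ (∀ i, b i ∈ integral K B) ∧
      (∀ i j, g j (b i) = if i = j then 1 else 0) ∧
      ∀ s ∈ F, s ∈ AddSubmonoid.closure (Set.range b) ∨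
        -s ∈ AddSubmonoid.closure (Set.range b) := by
  classical
  set V : Finset {p : K[X] // p ≠ 0} := F.biUnion Finsupp.support
  have hVU : (V : Set {p : K[X] // p ≠ 0}) ⊆ U := by
    rw [Finset.coe_biUnion]
    exact Set.iUnion₂_subset fun s hs => (Finsupp.mem_supported ℤ s).1 (hF s hs)
  set Λ := Finsupp.supported ℤ ℤ (V : Set {p : K[X] // p ≠ 0})
  have hFV (s) (hs : s ∈ F) : s ∈ Λ :=
    (Finsupp.mem_supported ℤ s).2 (Finset.coe_subset.2 (Finset.subset_biUnion_of_mem _ hs))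
  let e : (V →₀ ℤ) ≃ₗ[ℤ] Λ := (Finsupp.supportedEquivFinsupp (V : Set {p : K[X] // p ≠ 0})).symm
  have : Module.Free ℤ Λ := .of_equiv e
  have : Module.Finite ℤ Λ := .equiv e
  obtain ⟨b, hb, hbF⟩ :=
    exists_basis_submodule_mem_closure (P := integral K B) mem_or_neg_mem_integral Λ hFV
  refine ⟨_, fun i => b i, fun j => (b.coord j ∘ₗ Finsupp.restrictDom ℤ ℤ _).toAddMonoidHom,
    fun i => Finsupp.supported_mono hVU (b i).2, hb, fun i j => ?_, hbF⟩
  have hres : Finsupp.restrictDom ℤ ℤ (V : Set {p : K[X] // p ≠ 0}) (b i) = b i :=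
    LinearMap.congr_fun (Finsupp.restrictDom_comp_subtype (R := ℤ) (M := ℤ) _) (b i)
  change b.coord j (Finsupp.restrictDom ℤ ℤ _ _) = _
  rw [hres, Basis.coord_apply, Basis.repr_self, Finsupp.single_apply]

end FormalProduct

namespace IntegralAlgebra

section Constants

variable {K L A : Type*} [Field K] [Field L] [Algebra K[X] L] [FaithfulSMul K[X] L] [CommRing A]
  {B : ValuationSubring L} [Algebra A B]

variable (A) in
/-- The formal products in `integral K B` whose monomial is a constant modulo the ideal `J`. -/
def constantModulo (J : Ideal (IntegralAlgebra K A B)) : AddSubmonoid (FormalProduct K) where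
  carrier := {l | l ∈ integral K B ∧ ∃ a : A, mono A B l - algebraMap A _ a ∈ J}
  zero_mem' := ⟨zero_mem _, 1, by rw [mono_zero, map_one, sub_self]; exact zero_mem J⟩
  add_mem' := by
    rintro l l' ⟨hl, a, ha⟩ ⟨hl', a', ha'⟩
    refine ⟨add_mem hl hl', a * a', ?_⟩
    rw [mono_add hl hl', map_mul]
    exact J.mul_sub_mul_mem ha ha'

theorem sub_algebraMap_mem_of_mem_constantModulo [FaithfulSMul A B]
    {J : Ideal (IntegralAlgebra K A B)} (hJ : ∀ y ∈ J, value y = 0) {l : FormalProduct K}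
    (hl : l ∈ constantModulo A J) {a : A} (ha : value (mono A B l) = algebraMap A B a) :
    mono A B l - algebraMap A _ a ∈ J := by
  obtain ⟨-, a', ha'⟩ := hl
  have h := hJ _ ha'
  rw [map_sub, AlgHom.commutes, ha, sub_eq_zero] at h
  rwa [FaithfulSMul.algebraMap_injective A B h]

variable [Algebra K L] [IsScalarTower K K[X] L] [Algebra A K] [Algebra A L] [IsScalarTower A K L]
  [IsScalarTower A B L] (hA : ∀ c : K, algebraMap K L c ∈ B → c ∈ (algebraMap A K).range)
include hA

theorem exists_algebraMap_eq_value_mono {l : FormalProduct K} (hl : l ∈ integral K B)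
    (hlc : l ∈ Finsupp.supported ℤ ℤ (constants K)) :
    ∃ a : A, algebraMap A B a = value (mono A B l) := by
  obtain ⟨c, hc⟩ := exists_algebraMap_eq_evalProd_of_constants (L := L) hlc
  obtain ⟨a, rfl⟩ := hA c (hc ▸ hl)
  refine ⟨a, Subtype.ext ?_⟩
  rw [coe_value_mono hl, ← hc, ← IsScalarTower.algebraMap_apply A K L,
    IsScalarTower.algebraMap_apply A B L]
  rfl

theorem mem_constantModulo_of_neg_mem [FaithfulSMul A B] {J : Ideal (IntegralAlgebra K A B)}
    (hJ : ∀ y ∈ J, value y = 0) {l : FormalProduct K} (hl : l ∈ integral K B)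
    (hlc : l ∈ Finsupp.supported ℤ ℤ (constants K)) (hneg : -l ∈ constantModulo A J) :
    l ∈ constantModulo A J := by
  obtain ⟨a, ha⟩ := exists_algebraMap_eq_value_mono hA hl hlc
  obtain ⟨a', ha'⟩ := exists_algebraMap_eq_value_mono hA hneg.1 (neg_mem hlc)
  have hmono : mono A B l * mono A B (-l) = 1 := by
    rw [← mono_add hl hneg.1, add_neg_cancel, mono_zero]
  have haa' : a * a' = 1 := by
    refine FaithfulSMul.algebraMap_injective A B ?_
    rw [map_mul, ha, ha', ← map_mul, hmono, map_one, map_one]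
  have haa'' := congrArg (algebraMap A (IntegralAlgebra K A B)) haa'
  rw [map_mul, map_one] at haa''
  have h : mono A B l - algebraMap A _ a =
      -(mono A B l * algebraMap A _ a) * (mono A B (-l) - algebraMap A _ a') := by
    linear_combination algebraMap A _ a * hmono - mono A B l * haa''
  exact ⟨hl, a, h ▸ J.mul_mem_left _ (sub_algebraMap_mem_of_mem_constantModulo hJ hneg ha'.symm)⟩

theorem exists_sub_algebraMap_mem_span {x : IntegralAlgebra K A B}
    (hx : x ∈ monomialSubalgebra A B (constants K)) :
    ∃ a : A, algebraMap A B a = value x ∧ x - algebraMap A _ a ∈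
      Ideal.span {r : IntegralAlgebra K A B | value r = 0 ∧
        ∃ l ∈ Finsupp.supported ℤ ℤ (constants K), l ∈ integral K B ∧
          ∃ a : A, r = mono A B l - algebraMap A _ a} := by
  induction hx using monoSpan_induction with
  | mono l hl hlB =>
    obtain ⟨a, ha⟩ := exists_algebraMap_eq_value_mono hA hlB hl
    refine ⟨a, ha, Ideal.subset_span ⟨?_, l, hl, hlB, a, rfl⟩⟩
    rw [map_sub, AlgHom.commutes, ha, sub_self]
  | zero => exact ⟨0, by rw [map_zero, map_zero], by rw [map_zero, sub_zero]; exact zero_mem _⟩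
  | add x y _ _ hx hy =>
    obtain ⟨a, ha, hxa⟩ := hx
    obtain ⟨a', ha', hya⟩ := hy
    refine ⟨a + a', by rw [map_add, map_add, ha, ha'], ?_⟩
    rw [map_add, add_sub_add_comm]
    exact add_mem hxa hya
  | smul c x _ hx =>
    obtain ⟨a, ha, hxa⟩ := hx
    refine ⟨c * a, by rw [map_smul, ← ha, map_mul, Algebra.smul_def], ?_⟩
    rw [map_mul, ← Algebra.smul_def, ← smul_sub, Algebra.smul_def]
    exact Ideal.mul_mem_left _ _ hxa

theorem splitsProducts_constants : SplitsProducts A B (constants K) := by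
  rintro g g' ν hν h
  obtain ⟨x, hx, hxν⟩ := mem_attained.1 h
  obtain ⟨a, ha, -⟩ := exists_sub_algebraMap_mem_span hA hx
  obtain ⟨c, hc⟩ := exists_algebraMap_eq_evalProd_of_constants (L := L) hν
  have hgg' : (g : K[X]) * g' = C (algebraMap A K a / c) := by
    refine FaithfulSMul.algebraMap_injective K[X] L ?_
    rw [map_mul, ← algebraMap_eq, ← IsScalarTower.algebraMap_apply K K[X] L, map_div₀, hc,
      ← IsScalarTower.algebraMap_apply A K L, IsScalarTower.algebraMap_apply A B L, ha,
      eq_div_iff (evalProd_ne_zero L ν), ← evalProd_of, ← evalProd_of, ← evalProd_add,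
      ← evalProd_add, ← hxν]
    rfl
  have hg : g ∈ constants K := by
    have hdeg : (g : K[X]).degree + (g' : K[X]).degree ≤ 0 := by
      rw [← degree_mul, hgg']
      exact degree_C_le
    exact (le_add_of_nonneg_right (zero_le_degree_iff.2 g'.2)).trans hdeg
  refine ⟨-of g, neg_mem (Finsupp.single_mem_supported ℤ 1 hg), ?_, ?_⟩
  · rw [add_neg_cancel]
    exact zero_mem _
  · convert h using 1
    abel

theorem exists_finset_mem_span_of_mem_relationIdeal_constants [FaithfulSMul A B]
    {x : IntegralAlgebra K A B} (hx : x ∈ relationIdeal A B (constants K)) :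
    ∃ T : Finset (IntegralAlgebra K A B), x ∈ Ideal.span (T : Set (IntegralAlgebra K A B)) ∧
      ∀ r ∈ T, value r = 0 ∧ ∃ l ∈ Finsupp.supported ℤ ℤ (constants K), l ∈ integral K B ∧
        ∃ a : A, r = mono A B l - algebraMap A _ a := by
  have hspan := (Ideal.span_le.2 fun y hy => by
    obtain ⟨a, ha, hya⟩ := exists_sub_algebraMap_mem_span hA hy.1
    rw [hy.2, map_eq_zero_iff _ (FaithfulSMul.algebraMap_injective A B)] at ha
    rwa [ha, map_zero, sub_zero] at hya : relationIdeal A B (constants K) ≤ _) hx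
  obtain ⟨T, hT, hxT⟩ := Submodule.mem_span_finite_of_mem_span hspan
  exact ⟨T, hxT, fun r hr => hT hr⟩

theorem derivationsDetectSq_constants [FaithfulSMul A B] :
    DerivationsDetectSq A B (constants K) := by
  classical
  intro x hx hD
  obtain ⟨T, hxT, hT⟩ := exists_finset_mem_span_of_mem_relationIdeal_constants hA hx
  choose! hval l hl hlB a hla using hT
  obtain ⟨n, b, g, hb, hbB, hgb, hcl⟩ := exists_dual_mem_closure (L := L) (B := B)
    (F := T.image l) (by simpa using hl)
  choose c hc using fun i => exists_algebraMap_eq_value_mono hA (hbB i) (hb i)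
  have hr (i) : value (mono A B (b i) - algebraMap A _ (c i)) = 0 := by
    rw [map_sub, AlgHom.commutes, hc, sub_self]
  set J := Ideal.span (Set.range fun i => mono A B (b i) - algebraMap A _ (c i))
  have hJ0 : ∀ y ∈ J, value y = 0 := by
    suffices J ≤ RingHom.ker value from this
    exact Ideal.span_le.2 (Set.range_subset_iff.2 hr)
  have hclJ : AddSubmonoid.closure (Set.range b) ≤ constantModulo A J :=
    (AddSubmonoid.closure_le).2 <| Set.range_subset_iff.2 fun i =>
      ⟨hbB i, c i, Ideal.subset_span ⟨i, rfl⟩⟩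
  have hxJ : x ∈ J := by
    refine Submodule.span_le.2 (fun t ht => ?_) hxT
    have hval' := hval t ht
    rw [hla t ht, map_sub, AlgHom.commutes, sub_eq_zero] at hval'
    rw [SetLike.mem_coe, hla t ht]
    refine sub_algebraMap_mem_of_mem_constantModulo hJ0 ?_ hval'
    exact (hcl _ (Finset.mem_image_of_mem l ht)).elim (fun h => hclJ h) fun h =>
      mem_constantModulo_of_neg_mem hA hJ0 (hlB t ht) (hl t ht) (hclJ h)
  have hlog (i j) : logDeriv A B (g j) (mono A B (b i) - algebraMap A _ (c i)) =
      if i = j then value (mono A B (b i)) else 0 := by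
    rw [map_sub, Derivation.map_algebraMap, sub_zero, logDeriv_mono _ (hbB i), hgb, ite_smul,
      one_smul, zero_smul]
  refine mem_ker_sq_of_forall_derivation_eq_zero hr (fun j => logDeriv A B (g j)) (fun i => ?_)
    (fun i j hij => by rw [hlog, if_neg hij]) hxJ fun j => hD _
  rw [hlog, if_pos rfl, Ne, ← ZeroMemClass.coe_eq_zero, coe_value_mono (hbB i)]
  exact evalProd_ne_zero L _

end Constants

end IntegralAlgebra

theorem IntegralAlgebra.derivationsDetectSq_univ {K L A : Type*} [Field K] [Field L] [CommRing A]
    [Algebra K L] [Algebra K[X] L] [IsScalarTower K K[X] L] [FaithfulSMul K[X] L] [Algebra A K]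
    [Algebra A L] [IsScalarTower A K L] {B : ValuationSubring L} [Algebra A B]
    [IsScalarTower A B L] [FaithfulSMul A B]
    (hA : ∀ c : K, algebraMap K L c ∈ B → c ∈ (algebraMap A K).range) :
    DerivationsDetectSq A B (Set.univ : Set {p : K[X] // p ≠ 0}) := by
  have : IsScalarTower A K[X] L := .to₁₃₄ A K K[X] L
  obtain ⟨U, hcU, hU⟩ := zorn_subset_nonempty
    {U : Set {p : K[X] // p ≠ 0} | SplitsProducts A B U ∧ DerivationsDetectSq A B U}
    (fun c hc hchain hne => by
      have := hne.to_subtype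
      have hdir : Directed (· ⊆ ·) ((↑) : c → Set {p : K[X] // p ≠ 0}) := hchain.directed
      refine ⟨⋃₀ c, ?_, fun U => Set.subset_sUnion_of_mem⟩
      rw [Set.sUnion_eq_iUnion]
      exact ⟨.iUnion_of_directed hdir fun i => (hc i.2).1,
        .iUnion_of_directed hdir fun i => (hc i.2).2⟩)
    (constants K) ⟨splitsProducts_constants hA, derivationsDetectSq_constants hA⟩
  suffices hUuniv : U = Set.univ from hUuniv ▸ hU.prop.2
  by_contra hne
  obtain ⟨f, hf, hmin⟩ := (InvImage.wf (fun p : {p : K[X] // p ≠ 0} => (p : K[X]).degree)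
    wellFounded_lt).has_min Uᶜ (Set.nonempty_compl.2 hne)
  have hlow (p : {p : K[X] // p ≠ 0}) (hp : (p : K[X]).degree < (f : K[X]).degree) : p ∈ U :=
    not_not.1 fun hpU => hmin p hpU hp
  have hdeg : 0 < (f : K[X]).degree := not_le.1 fun h => hf (hcU h)
  exact hf <| hU.le_of_ge ⟨hU.prop.1.insert hf hdeg hlow, hU.prop.2.insert hf hU.prop.1⟩
    (Set.subset_insert f U) (Set.mem_insert f U)

theorem h1Cotangent_integers_ratFunc_eq_zero_general {K L A : Type*} [Field K] [Field L]
    [CommRing A] [Algebra K L] [Algebra K[X] L] [IsScalarTower K K[X] L] [IsFractionRing K[X] L]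
    [Algebra A K] [Algebra A L] [IsScalarTower A K L] {B : ValuationSubring L} [Algebra A B]
    [IsScalarTower A B L] [FaithfulSMul A B]
    (hA : ∀ c : K, algebraMap K L c ∈ B → c ∈ (algebraMap A K).range) :
    Subsingleton (Algebra.H1Cotangent A B) :=
  subsingleton_h1Cotangent_of_surjective (S := IntegralAlgebra K A B)
    IntegralAlgebra.value_surjective
    (exists_subalgebra_formallySmooth_addMonoidAlgebra mem_or_neg_mem_integral)
    fun x hx hD => IntegralAlgebra.derivationsDetectSq_univ hA x
      (IntegralAlgebra.mem_relationIdeal_univ hx) hD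

theorem mem_or_inv_mem_unitBall {L : Type*} [Field L] (w : AddValuation L (WithTop ℝ)) (x : L) :
    x ∈ w.unitBall ∨ x⁻¹ ∈ w.unitBall := by
  refine (le_total 0 (w x)).imp_right fun hx => ?_
  change 0 ≤ w x⁻¹
  rcases eq_or_ne x 0 with rfl | hx0
  · rw [inv_zero, w.map_zero]
    exact le_top
  · calc 0 = w x + w x⁻¹ := by rw [← w.map_mul, mul_inv_cancel₀ hx0, w.map_one]
      _ ≤ 0 + w x⁻¹ := by gcongr
      _ = w x⁻¹ := zero_add _

/-- Let `(K, v_K)` be a field with a non-trivial real-valued valuation, let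
`L = K(T)` be the field of rational functions in one variable over `K`, and let `w` be any
real-valued valuation on `L` extending `v_K`, with ring of integers `L° = {f : w(f) ≥ 0}`.
Then `H₁(𝕃_{L°/K°}) = 0`. -/
theorem h1Cotangent_integers_ratFunc_eq_zero
    {K : Type*} [Field K]
    (vK : AddValuation K (WithTop ℝ)) (hnt : vK.IsNontrivial)
    (w : AddValuation (RatFunc K) (WithTop ℝ))
    (hext : ∀ x : K, w (algebraMap K (RatFunc K) x) = vK x)
    [Algebra vK.unitBall w.unitBall]
    (hcomp : ∀ x : vK.unitBall,
      (algebraMap vK.unitBall w.unitBall x : RatFunc K) = algebraMap K (RatFunc K) (x : K)) :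
    Subsingleton (Algebra.H1Cotangent vK.unitBall w.unitBall) := by
  let B : ValuationSubring (RatFunc K) :=
    { w.unitBall with mem_or_inv_mem' := mem_or_inv_mem_unitBall w }
  let _ : Algebra vK.unitBall B := inferInstanceAs (Algebra vK.unitBall w.unitBall)
  have : IsScalarTower vK.unitBall B (RatFunc K) := .of_algebraMap_eq fun a => (hcomp a).symm
  have : FaithfulSMul vK.unitBall B := (faithfulSMul_iff_algebraMap_injective _ _).2
    fun a b h => Subtype.ext <| (algebraMap K (RatFunc K)).injective <| by
      rw [← hcomp, ← hcomp]; exact congrArg Subtype.val h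
  exact h1Cotangent_integers_ratFunc_eq_zero_general (K := K) (B := B) fun c hc =>
    ⟨⟨c, (hext c).le.trans' hc⟩, rfl⟩
end
end

section
/- Let (K, v_K) be a field with a non-trivial real-valued valuation and let (A, v) be a scalable semi-valued (K, v_K)-algebra which is a domain with ker v = {0}, such that ⋂_{n≥0} φⁿA = {0} for the prime element φ ∈ A below. Let θ, α, β ∈ A^× be units with v(θ) = v(φ) ≤ v(α) ≤ v(β) (so θ⁻¹α, θ⁻¹φ and α⁻¹β lie in A°). Then the kernel of the A°-algebra homomorphism A°[X, Y] → A[φ⁻¹] sending X to α⁻¹φ and Y to βφ⁻¹ is the ideal generated by X·Y − α⁻¹β and (θ⁻¹α)·X − θ⁻¹φ; in particular A°[α⁻¹φ, βφ⁻¹] ≅ A°[X, Y]/(X·Y − α⁻¹β, (θ⁻¹α)·X − θ⁻¹φ). -/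
noncomputable section

/-- An element `a` is a *constant* of the subring `R` (with respect to the semi-valuation `v`
on the ambient ring) if `a ∈ R`, `a` is not in the kernel of `v`, and `a` divides (within `R`)
every element of `R` of larger or equal value. -/
def AddValuation.IsConstantOn {A : Type*} [CommRing A] (v : AddValuation A (WithTop ℝ))
    (R : Subring A) (a : A) : Prop :=
  a ∈ R ∧ v a ≠ ⊤ ∧ ∀ b ∈ R, v a ≤ v b → ∃ c ∈ R, a * c = b

/-- The subring `R` of the semi-valued ring `(A, v)` is *scalable* if every value
`r ∈ v(R) \ {∞}` is the value of some constant of `R`. -/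
def AddValuation.ScalableOn {A : Type*} [CommRing A] (v : AddValuation A (WithTop ℝ))
    (R : Subring A) : Prop :=
  ∀ r : WithTop ℝ, r ≠ ⊤ → (∃ x ∈ R, v x = r) → ∃ a : A, v.IsConstantOn R a ∧ v a = r

/-!
If `p` is a nonzerodivisor modulo `a` and `f a * y = f p` for an injective `f`, then evaluation at
`y = p / a` has kernel generated by `a Y - p`: clearing denominators shows that `a` divides the
leading coefficient of any polynomial vanishing at `y`, so subtracting a multiple of `a Y - p`
lowers its degree. When `f` is not injective the same argument works modulo `ker f`.

Apply this twice, with `a = θ⁻¹α`, `p = θ⁻¹φ` and `b = α⁻¹β`. Evaluating `X` at `α⁻¹φ = p / a` has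
kernel `(a X - p)`, because `p` has value `0` and so is a nonzerodivisor modulo the unit `a` of `A`.
Evaluating then `Y` at `βφ⁻¹ = b / (α⁻¹φ)` adds the generator `X Y - b`: modulo `a X - p` and `X`
only `A° / p` is left of `A°[X]`, and there `b`, a unit of `A`, is a nonzerodivisor.
-/

section EvalKernel

open Polynomial Ideal

variable {S L : Type*} [CommRing S] [CommRing L]

lemma dvd_eval_scaleRoots_sub (P : S[X]) (a p : S) :
    a ∣ (P.scaleRoots a).eval p - P.leadingCoeff * p ^ P.natDegree := by
  rw [eval_eq_sum_range, natDegree_scaleRoots, Finset.sum_range_succ, coeff_scaleRoots_natDegree,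
    add_sub_cancel_right]
  refine Finset.dvd_sum fun i hi ↦ ?_
  have hexp : P.natDegree - i ≠ 0 := (Nat.sub_pos_of_lt (Finset.mem_range.mp hi)).ne'
  rw [coeff_scaleRoots]
  exact ((dvd_pow_self a hexp).mul_left _).mul_right _

variable {f : S →+* L} {a p : S} {y : L}

lemma leadingCoeff_mem_of_eval₂_eq_zero (hy : f a * y = f p)
    (hp : ∀ c, p * c ∈ span {a} ⊔ RingHom.ker f → c ∈ span {a} ⊔ RingHom.ker f)
    {P : S[X]} (hP : P.eval₂ f y = 0) : P.leadingCoeff ∈ span {a} ⊔ RingHom.ker f := by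
  have heval : (P.scaleRoots a).eval p ∈ RingHom.ker f := by
    rw [RingHom.mem_ker, ← eval₂_at_apply, ← hy, scaleRoots_eval₂_mul, hP, mul_zero]
  have hpow : p ^ P.natDegree * P.leadingCoeff ∈ span {a} ⊔ RingHom.ker f := by
    rw [mul_comm, ← sub_sub_cancel ((P.scaleRoots a).eval p) (P.leadingCoeff * _)]
    exact sub_mem (mem_sup_right heval)
      (mem_sup_left (mem_span_singleton.mpr (dvd_eval_scaleRoots_sub P a p)))
  generalize P.natDegree = n at hpow
  induction n with
  | zero => simpa using hpow
  | succ n ih => exact ih (hp _ (by rwa [← mul_assoc, ← pow_succ']))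

lemma exists_natDegree_le_sub_mem {I : Ideal S} {P : S[X]} {n : ℕ} (hn : P.natDegree = n + 1)
    (hP : P.leadingCoeff ∈ span {a} ⊔ I) :
    ∃ Q : S[X], Q.natDegree ≤ n ∧ P - Q ∈ I.map C ⊔ span {C a * X - C p} := by
  obtain ⟨d, k, hk, hlead⟩ := mem_span_singleton_sup.mp hP
  refine ⟨P.eraseLead + C (d * p) * X ^ n, natDegree_add_le_of_degree_le
    (P.eraseLead_natDegree_le.trans (by rw [hn, Nat.add_sub_cancel]))
    (natDegree_C_mul_X_pow_le _ _), ?_⟩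
  have hsplit : P - (P.eraseLead + C (d * p) * X ^ n) =
      X ^ (n + 1) * C k + C d * X ^ n * (C a * X - C p) := by
    conv_lhs => enter [1]; rw [← P.eraseLead_add_C_mul_X_pow, hn, ← hlead]
    simp only [map_add, map_mul]
    ring
  rw [hsplit]
  exact Submodule.add_mem_sup (mul_mem_left _ _ (mem_map_of_mem C hk))
    (mul_mem_left _ _ (mem_span_singleton_self _))

theorem ker_eval₂RingHom_eq_map_C_sup_span (hy : f a * y = f p)
    (hp : ∀ c, p * c ∈ span {a} ⊔ RingHom.ker f → c ∈ span {a} ⊔ RingHom.ker f) :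
    RingHom.ker (eval₂RingHom f y) = (RingHom.ker f).map C ⊔ span {C a * X - C p} := by
  have hle : (RingHom.ker f).map C ⊔ span {C a * X - C p} ≤ RingHom.ker (eval₂RingHom f y) := by
    rw [sup_le_iff, map_le_iff_le_comap, span_singleton_le_iff_mem]
    exact ⟨fun k hk ↦ by simpa using hk, by simp [hy]⟩
  refine le_antisymm (fun P hP ↦ ?_) hle
  induction hn : P.natDegree using Nat.strong_induction_on generalizing P with
  | _ n ih =>
    cases n with
    | zero =>
      rw [eq_C_of_natDegree_eq_zero hn] at hP ⊢
      exact mem_sup_left (mem_map_of_mem C (by simpa using hP))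
    | succ n =>
      obtain ⟨Q, hdeg, hPQ⟩ := exists_natDegree_le_sub_mem (p := p) hn
        (leadingCoeff_mem_of_eval₂_eq_zero hy hp hP)
      have hQ := ih _ (Nat.lt_succ_of_le hdeg) Q
        ((Submodule.sub_mem_iff_right _ hP).mp (hle hPQ)) rfl
      exact (Submodule.sub_mem_iff_left _ hQ).mp hPQ

lemma mem_span_X_sup_span_iff {P : S[X]} :
    P ∈ span {X} ⊔ span {C a * X - C p} ↔ p ∣ P.coeff 0 := by
  rw [mem_span_singleton_sup]
  constructor
  · rintro ⟨Q, _, hR, rfl⟩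
    obtain ⟨R, rfl⟩ := mem_span_singleton.mp hR
    simp [mul_coeff_zero]
  · rintro ⟨c, hc⟩
    refine ⟨P.divX + C (a * c), (C a * X - C p) * -C c,
      mul_mem_right _ _ (mem_span_singleton_self _), ?_⟩
    conv_rhs => rw [← P.divX_mul_X_add, hc]
    simp only [map_mul]
    ring

end EvalKernel

section AevalKernel

open Polynomial Ideal
open scoped Polynomial.Bivariate

variable {R L : Type*} [CommRing R] [CommRing L] [Algebra R L] {a b p : R} {x y : L}

theorem ker_aeval_eq_span (hinj : Function.Injective (algebraMap R L))
    (hx : algebraMap R L a * x = algebraMap R L p) (hap : ∀ c, a ∣ p * c → a ∣ c) :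
    RingHom.ker (aeval (R := R) x) = span {C a * X - C p} := by
  have hker : RingHom.ker (algebraMap R L) = ⊥ := (RingHom.injective_iff_ker_eq_bot _).mp hinj
  have h := ker_eval₂RingHom_eq_map_C_sup_span hx (by simpa [hker, mem_span_singleton] using hap)
  rwa [hker, Ideal.map_bot, bot_sup_eq] at h

theorem ker_aevalAeval_eq_span (hinj : Function.Injective (algebraMap R L))
    (hx : algebraMap R L a * x = algebraMap R L p) (hxy : x * y = algebraMap R L b)
    (hap : ∀ c, a ∣ p * c → a ∣ c) (hpb : ∀ c, p ∣ b * c → p ∣ c) :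
    RingHom.ker (aevalAeval (R := R) x y) =
      span {C X * Y - C (C b), C (C a * X - C p)} := by
  let evalX : R[X] →+* L := (aeval x : R[X] →ₐ[R] L)
  have hker : RingHom.ker evalX = span {C a * X - C p} := ker_aeval_eq_span hinj hx hap
  have hreg (P : R[X]) (hP : C b * P ∈ span {X} ⊔ RingHom.ker evalX) :
      P ∈ span {X} ⊔ RingHom.ker evalX := by
    rw [hker, mem_span_X_sup_span_iff] at hP ⊢
    exact hpb _ (by simpa using hP)
  have heval : (aevalAeval (R := R) x y : R[X][Y] →+* L) = eval₂RingHom evalX y := by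
    ext <;> simp [evalX]
  calc RingHom.ker (aevalAeval (R := R) x y)
      = RingHom.ker (eval₂RingHom evalX y) := congrArg RingHom.ker heval
    _ = (span {C a * X - C p}).map C ⊔ span {C X * Y - C (C b)} := by
        rw [ker_eval₂RingHom_eq_map_C_sup_span (by simpa [evalX] using hxy) hreg, hker]
    _ = span {C X * Y - C (C b), C (C a * X - C p)} := by
        rw [map_span, Set.image_singleton, sup_comm, ← span_insert]

theorem ker_aeval_fin_two_eq_span (hinj : Function.Injective (algebraMap R L))
    (hx : algebraMap R L a * x = algebraMap R L p) (hxy : x * y = algebraMap R L b)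
    (hap : ∀ c, a ∣ p * c → a ∣ c) (hpb : ∀ c, p ∣ b * c → p ∣ c) :
    RingHom.ker (MvPolynomial.aeval (R := R) ![x, y]) =
      span {MvPolynomial.X 0 * MvPolynomial.X 1 - MvPolynomial.C b,
        MvPolynomial.C a * MvPolynomial.X 0 - MvPolynomial.C p} := by
  let e := (Bivariate.equivMvPolynomial R).toRingEquiv
  have hcomp : (MvPolynomial.aeval (R := R) ![x, y] : MvPolynomial (Fin 2) R →+* L) =
      (aevalAeval (R := R) x y : R[X][Y] →+* L).comp e.symm := by
    ext i
    · simp [e]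
    · fin_cases i <;> simp [e]
  calc RingHom.ker (MvPolynomial.aeval (R := R) ![x, y])
      = (RingHom.ker (aevalAeval (R := R) x y)).map e := by
        rw [← Ideal.comap_symm]; exact congrArg RingHom.ker hcomp
    _ = _ := by
        rw [ker_aevalAeval_eq_span hinj hx hxy hap hpb, map_span, Set.image_pair]
        simp [e]

end AevalKernel

section Integers

variable {A Γ₀ O : Type*} [CommRing A] [LinearOrderedCommGroupWithZero Γ₀] [CommRing O]
  [Algebra O A] {v : Valuation A Γ₀} {a b p c : O}

lemma dvd_of_dvd_mul_of_isUnit_of_valuation_eq_one (hO : v.Integers O)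
    (ha : IsUnit (algebraMap O A a)) (hp : v (algebraMap O A p) = 1) (h : a ∣ p * c) : a ∣ c := by
  obtain ⟨d, hd⟩ := h
  obtain ⟨t, ht⟩ := ha.dvd (a := algebraMap O A c)
  have hpt : algebraMap O A p * t = algebraMap O A d := ha.mul_left_cancel <| by
    rw [← map_mul, ← hd, map_mul, ht, mul_left_comm]
  obtain ⟨t', rfl⟩ : ∃ t', algebraMap O A t' = t := hO.exists_of_le_one <| by
    simpa [← hpt, hp] using hO.map_le_one d
  exact ⟨t', hO.hom_inj (by rw [ht, map_mul])⟩

lemma dvd_of_dvd_mul_of_valuation_eq_one_of_isUnit (hO : v.Integers O)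
    (hb : IsUnit (algebraMap O A b)) (hp : v (algebraMap O A p) = 1) (h : p ∣ b * c) : p ∣ c := by
  obtain ⟨d, hd⟩ := h
  obtain ⟨t, ht⟩ := hb.dvd (a := algebraMap O A d)
  have hpt : algebraMap O A c = algebraMap O A p * t := hb.mul_left_cancel <| by
    rw [← map_mul, hd, map_mul, ht, mul_left_comm]
  obtain ⟨t', rfl⟩ : ∃ t', algebraMap O A t' = t := hO.exists_of_le_one <| by
    simpa [hpt, hp] using hO.map_le_one c
  exact ⟨t', hO.hom_inj (by rw [hpt, map_mul])⟩

end Integers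

lemma integers_unitBall {A : Type*} [CommRing A] (v : AddValuation A (WithTop ℝ)) :
    (AddValuation.toValuation v).Integers v.unitBall where
  hom_inj := Subtype.val_injective
  map_le_one a := a.2
  exists_of_le_one a ha := ⟨⟨a, ha⟩, rfl⟩

lemma algebraMap_mul_invSelf {A : Type*} [CommRing A] (φ : A) :
    algebraMap A (Localization.Away φ) φ * Localization.Away.invSelf φ = 1 := by
  rw [Localization.Away.invSelf, Localization.mk_eq_mk']
  exact IsLocalization.Away.mul_invSelf φ

theorem kernel_aeval_enlargement_case_beth_general
    {A Γ₀ O L : Type*} [CommRing A] [LinearOrderedCommGroupWithZero Γ₀] [CommRing O] [CommRing L]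
    [Algebra O A] [Algebra A L] [Algebra O L] [IsScalarTower O A L]
    {v : Valuation A Γ₀} (hO : v.Integers O) (hL : Function.Injective (algebraMap A L))
    {φ : A} {φinv : L} (hφ : algebraMap A L φ * φinv = 1) {θ α β : Aˣ} (hθ : v θ = v φ)
    {u₁ u₂ u₃ : O} (hu₁ : algebraMap O A u₁ = ↑α⁻¹ * ↑β) (hu₂ : algebraMap O A u₂ = ↑θ⁻¹ * ↑α)
    (hu₃ : algebraMap O A u₃ = ↑θ⁻¹ * φ) :
    RingHom.ker (MvPolynomial.aeval (R := O)
        ![algebraMap A L ((↑α⁻¹ : A) * φ), algebraMap A L (↑β : A) * φinv]) =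
      Ideal.span
        {MvPolynomial.X 0 * MvPolynomial.X 1 - MvPolynomial.C u₁,
         MvPolynomial.C u₂ * MvPolynomial.X 0 - MvPolynomial.C u₃} := by
  have hunit₁ : IsUnit (algebraMap O A u₁) := hu₁ ▸ (α⁻¹ * β).isUnit
  have hunit₂ : IsUnit (algebraMap O A u₂) := hu₂ ▸ (θ⁻¹ * α).isUnit
  have hval₃ : v (algebraMap O A u₃) = 1 := by
    rw [hu₃, map_mul, ← hθ, ← map_mul, Units.inv_mul, map_one]
  refine ker_aeval_fin_two_eq_span ?_ ?_ ?_
    (fun _ ↦ dvd_of_dvd_mul_of_isUnit_of_valuation_eq_one hO hunit₂ hval₃)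
    (fun _ ↦ dvd_of_dvd_mul_of_valuation_eq_one_of_isUnit hO hunit₁ hval₃)
  · rw [IsScalarTower.algebraMap_eq O A L]
    exact hL.comp hO.hom_inj
  · rw [IsScalarTower.algebraMap_apply O A L, IsScalarTower.algebraMap_apply O A L, hu₂, hu₃,
      ← map_mul, mul_assoc, Units.mul_inv_cancel_left]
  · rw [IsScalarTower.algebraMap_apply O A L, hu₁, map_mul, map_mul]
    linear_combination algebraMap A L ↑α⁻¹ * algebraMap A L β * hφ

/-- Let `(A, v)` be a scalable semi-valued `(K, v_K)`-algebra, a domain with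
trivial kernel and `⋂ₙ φⁿA = 0` for the prime `φ` below.  Let `θ, α, β ∈ A^×` with
`v(θ) = v(φ) ≤ v(α) ≤ v(β)`.  Then the kernel of the `A°`-algebra map `A°[X, Y] → A[φ⁻¹]`
sending `X ↦ α⁻¹φ` and `Y ↦ βφ⁻¹` is the ideal generated by `X·Y − α⁻¹β` and
`(θ⁻¹α)·X − θ⁻¹φ`. -/
theorem kernel_aeval_enlargement_case_beth
    {K A : Type*} [Field K] [CommRing A] [IsDomain A] [Algebra K A]
    (vK : AddValuation K (WithTop ℝ)) (hnt : vK.IsNontrivial)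
    (v : AddValuation A (WithTop ℝ))
    (hext : ∀ x : K, v (algebraMap K A x) = vK x)
    (hker : ∀ x : A, v x = ⊤ → x = 0)
    (hscal : v.ScalableOn ⊤)
    (φ : A) (hφ : Prime φ)
    (hsep : ∀ x : A, (∀ n : ℕ, φ ^ n ∣ x) → x = 0)
    (θ α β : Aˣ) (hθ : v ↑θ = v φ) (hα : v φ ≤ v ↑α) (hβ : v ↑α ≤ v ↑β)
    (u₁ u₂ u₃ : v.unitBall)
    (hu₁ : (u₁ : A) = ↑α⁻¹ * ↑β) (hu₂ : (u₂ : A) = ↑θ⁻¹ * ↑α) (hu₃ : (u₃ : A) = ↑θ⁻¹ * φ) :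
    RingHom.ker (MvPolynomial.aeval (R := v.unitBall)
        ![algebraMap A (Localization.Away φ) ((↑α⁻¹ : A) * φ),
          algebraMap A (Localization.Away φ) (↑β : A) * Localization.Away.invSelf φ]) =
      Ideal.span
        {MvPolynomial.X 0 * MvPolynomial.X 1 - MvPolynomial.C u₁,
         MvPolynomial.C u₂ * MvPolynomial.X 0 - MvPolynomial.C u₃} :=
  kernel_aeval_enlargement_case_beth_general (integers_unitBall v)
    (IsLocalization.injective _ (powers_le_nonZeroDivisors_of_noZeroDivisors hφ.ne_zero))
    (algebraMap_mul_invSelf φ) hθ hu₁ hu₂ hu₃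
end
end

section
/- Let (K, v_K) be a field with a non-trivial real-valued valuation and let (A, v) be a scalable semi-valued (K, v_K)-algebra which is a domain with ker v = {0}, such that ⋂_{n≥0} φⁿA = {0} for the prime element φ ∈ A below. Let m, ℓ ≥ 1 be coprime integers and d, e ∈ ℕ with ℓd − me = 1. Let α, β, θ ∈ A^× be units with v(θ) = v(φ), and assume α^ℓβ^{−m} ∈ A° and α^{−e}β^{d}θ^{−1} ∈ A°. Then the kernel of the A°-algebra homomorphism A°[X, Z, Y] → A[φ⁻¹] sending X to α⁻¹φ^m, Z to αφ^{−m}, and Y to β⁻¹φ^ℓ is the ideal generated by X·Z − 1, Z^ℓ·Y^m − α^ℓβ^{−m}, and (α^{−e}β^{d}θ^{−1})·Z^{e}·Y^{d} − θ^{−1}φ. -/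
noncomputable section

/-!
Let `Q` be the quotient of `A°[X, Z, Y]` by the ideal on the right-hand side; the claim is that the
induced map `Q → A[φ⁻¹]` is injective. A monomial `Z ^ s * Y ^ t` with `s ∈ ℤ` is sent to a unit of
`A` times `φ ^ n`, where `n = ℓ * t - m * s`. By `Z ^ ℓ * Y ^ m = g₁`, every monomial of weight `n`
is a multiple of the one with `t < m`, call it `M n`, so `Q` is generated by the `M n`, one for each
`n ∈ ℤ`; by the last relation, which has weight one, `g₃ • M n` is a multiple of `M (n + 1)`. If a
combination of `M N, …, M B` is sent to zero, then `φ`, and hence `g₃ = θ⁻¹φ`, which has value zero,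
divides its lowest coefficient: the lowest term is absorbed into the next one, and descending on the
number of terms one is left with a single term, whose coefficient vanishes.
-/

section SmulZpow

variable {A L : Type*} [CommRing A] [CommRing L] [Algebra A L] [FaithfulSMul A L]

lemma smul_coe_units_eq_zero_iff {a : A} (w : Lˣ) : a • (w : L) = 0 ↔ a = 0 := by
  rw [Algebra.smul_def, Units.mul_left_eq_zero, FaithfulSMul.algebraMap_eq_zero_iff]

lemma dvd_of_smul_zpow_add_smul_zpow_eq_zero {φ : A} {u : Lˣ} (hu : (u : L) = algebraMap A L φ)
    {a b : A} {n : ℤ}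
    (h : a • ((u ^ n : Lˣ) : L) + b • ((u ^ (n + 1) : Lˣ) : L) = 0) : φ ∣ a := by
  have hsum : (a + φ * b) • ((u ^ n : Lˣ) : L) = 0 := by
    rw [← h, zpow_add_one, Units.val_mul, hu]
    simp only [Algebra.smul_def, map_add, map_mul]
    ring
  rw [smul_coe_units_eq_zero_iff] at hsum
  exact (dvd_add_left (dvd_mul_right φ b)).mp (hsum ▸ dvd_zero φ)

end SmulZpow

section GradedGenerators

open Submodule

variable {R A L Q : Type*} [CommRing R] [CommRing A] [CommRing L] [AddCommGroup Q]
  [Algebra R A] [Algebra A L] [Algebra R L] [IsScalarTower R A L] [Module R Q]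
  {φ : A} {u : Lˣ} {ψ : Q →ₗ[R] L} {M : ℤ → Q}

lemma exists_map_eq_smul_zpow_of_mem_span_Ici {c : ℤ → A} (hu : (u : L) = algebraMap A L φ)
    (hM : ∀ n, ψ (M n) = c n • ((u ^ n : Lˣ) : L)) {N : ℤ} {q : Q}
    (hq : q ∈ span R (M '' Set.Ici N)) : ∃ b : A, ψ q = b • ((u ^ N : Lˣ) : L) := by
  suffices span R (M '' Set.Ici N) ≤
      ((A ∙ ((u ^ N : Lˣ) : L)).restrictScalars R).comap ψ by
    obtain ⟨b, hb⟩ := mem_span_singleton.mp (this hq)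
    exact ⟨b, hb.symm⟩
  rw [span_le]
  rintro _ ⟨n, hn, rfl⟩
  obtain ⟨k, rfl⟩ := Int.le.dest hn
  refine mem_span_singleton.mpr ⟨c (N + k) * φ ^ k, ?_⟩
  rw [hM, zpow_add, zpow_natCast, Units.val_mul, Units.val_pow_eq_pow_val, hu]
  simp only [Algebra.smul_def, map_mul, map_pow]
  ring

variable [FaithfulSMul R A] [FaithfulSMul A L] {c : ℤ → Aˣ} {g : R}

lemma eq_zero_of_mem_span_Icc_of_map_eq_zero (hu : (u : L) = algebraMap A L φ)
    (hM : ∀ n, ψ (M n) = (c n : A) • ((u ^ n : Lˣ) : L))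
    (hstep : ∀ n, ∃ r : R, g • M n = r • M (n + 1))
    (hdvd : ∀ a : R, φ ∣ algebraMap R A a → g ∣ a) {N B : ℤ} (hNB : N ≤ B) {q : Q}
    (hq : q ∈ span R (M '' Set.Icc N B)) (hψq : ψ q = 0) : q = 0 := by
  have map_smul_M (a : R) (n : ℤ) :
      ψ (a • M n) = (algebraMap R A a * c n) • ((u ^ n : Lˣ) : L) := by
    rw [map_smul, hM, mul_smul, algebraMap_smul]
  induction N, hNB using Int.leInductionDown generalizing q with
  | base =>
    rw [Set.Icc_self, Set.image_singleton, mem_span_singleton] at hq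
    obtain ⟨a, rfl⟩ := hq
    rw [map_smul_M, smul_coe_units_eq_zero_iff, Units.mul_left_eq_zero,
      FaithfulSMul.algebraMap_eq_zero_iff] at hψq
    rw [hψq, zero_smul]
  | pred N hNB ih =>
    rw [← Set.insert_Icc_add_one_left_eq_Icc (by lia), Set.image_insert_eq, sub_add_cancel,
      mem_span_insert] at hq
    obtain ⟨a, q', hq', rfl⟩ := hq
    obtain ⟨b, rfl⟩ : g ∣ a := by
      obtain ⟨s, hs⟩ := exists_map_eq_smul_zpow_of_mem_span_Ici hu hM
        (span_mono (Set.image_mono Set.Icc_subset_Ici_self) hq')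
      rw [map_add, map_smul_M, hs] at hψq
      rw [show u ^ N = u ^ (N - 1 + 1) by rw [sub_add_cancel]] at hψq
      exact hdvd a (Units.dvd_mul_right.mp (dvd_of_smul_zpow_add_smul_zpow_eq_zero hu hψq))
    obtain ⟨r, hr⟩ := hstep (N - 1)
    rw [sub_add_cancel] at hr
    have absorb : (g * b) • M (N - 1) = (b * r) • M N := by
      rw [mul_comm, mul_smul, hr, mul_smul]
    rw [absorb] at hψq ⊢
    exact ih (add_mem (smul_mem _ _ (subset_span (Set.mem_image_of_mem M ⟨le_rfl, hNB⟩))) hq') hψq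

lemma exists_mem_span_Icc_of_mem_span_range {q : Q} (hq : q ∈ span R (Set.range M)) :
    ∃ N B : ℤ, N ≤ B ∧ q ∈ span R (M '' Set.Icc N B) := by
  obtain ⟨a, rfl⟩ := Finsupp.mem_span_range_iff_exists_finsupp.mp hq
  obtain ⟨B, hB₀, hB⟩ := (bddAbove_iff_exists_ge 0).mp a.support.bddAbove
  obtain ⟨N, hN₀, hN⟩ := (bddBelow_iff_exists_le 0).mp a.support.bddBelow
  exact ⟨N, B, hN₀.trans hB₀, sum_mem fun n hn ↦ smul_mem _ _
    (subset_span (Set.mem_image_of_mem M ⟨hN n hn, hB n hn⟩))⟩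

theorem injective_of_map_generator_eq_smul_zpow (hu : (u : L) = algebraMap A L φ)
    (hM : ∀ n, ψ (M n) = (c n : A) • ((u ^ n : Lˣ) : L))
    (hstep : ∀ n, ∃ r : R, g • M n = r • M (n + 1))
    (hdvd : ∀ a : R, φ ∣ algebraMap R A a → g ∣ a)
    (hspan : span R (Set.range M) = ⊤) : Function.Injective ψ := by
  refine (injective_iff_map_eq_zero ψ).mpr fun q hψq ↦ ?_
  obtain ⟨N, B, hNB, hq⟩ :=
    exists_mem_span_Icc_of_mem_span_range (hspan ▸ mem_top : q ∈ span R (Set.range M))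
  exact eq_zero_of_mem_span_Icc_of_map_eq_zero hu hM hstep hdvd hNB hq hψq

end GradedGenerators

section Weight

variable {m ℓ : ℕ}

lemma exists_lt_and_weight_eq (hm : 0 < m) (hcop : IsCoprime (m : ℤ) ℓ) (n : ℤ) :
    ∃ (s : ℤ) (t : ℕ), t < m ∧ ℓ * t - m * s = n := by
  obtain ⟨a, b, hab⟩ := hcop
  have hm' : (0 : ℤ) < m := mod_cast hm
  obtain ⟨t, ht⟩ := Int.eq_ofNat_of_zero_le (Int.emod_nonneg (n * b) hm'.ne')
  have hdiv := Int.emod_add_mul_ediv (n * b) m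
  refine ⟨-(n * a) - ℓ * (n * b / m), t, by have := Int.emod_lt_of_pos (n * b) hm'; lia, ?_⟩
  rw [← ht]
  linear_combination ℓ * hdiv + n * hab

lemma exists_eq_add_mul_of_weight_eq (hcop : IsCoprime (m : ℤ) ℓ) {s s₀ : ℤ} {t t₀ : ℕ}
    (ht₀ : t₀ < m) (h : (ℓ * t - m * s : ℤ) = ℓ * t₀ - m * s₀) :
    ∃ k : ℕ, s = s₀ + (ℓ * k : ℕ) ∧ t = t₀ + m * k := by
  obtain ⟨k, hk⟩ : (m : ℤ) ∣ t - t₀ :=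
    hcop.dvd_of_dvd_mul_left ⟨s - s₀, by linear_combination h⟩
  have hm : (0 : ℤ) < m := by lia
  have hk₀ : 0 ≤ k := by
    by_contra! hneg
    nlinarith
  lift k to ℕ using hk₀
  refine ⟨k, mul_left_cancel₀ hm.ne' ?_, by zify; linear_combination hk⟩
  push_cast
  linear_combination ℓ * hk - h

lemma mul_zpow_mul_mul_pow_eq {G : Type*} [CommGroup G] (a b u : G) (s : ℤ) (t : ℕ) :
    (a * (u ^ m)⁻¹) ^ s * (b * u ^ ℓ) ^ t = a ^ s * b ^ t * u ^ (ℓ * t - m * s : ℤ) := by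
  rw [mul_zpow, mul_pow, mul_mul_mul_comm, zpow_sub, zpow_mul, zpow_mul, inv_zpow]
  simp only [zpow_natCast, mul_comm]

variable {R Q : Type*} [CommRing R] [CommRing Q] [Algebra R Q] {z : Qˣ} {y : Q} {g₁ : R}

lemma exists_monomial_eq_smul_of_weight_eq (hcop : IsCoprime (m : ℤ) ℓ)
    (hg₁ : (z : Q) ^ ℓ * y ^ m = algebraMap R Q g₁) {s s₀ : ℤ} {t t₀ : ℕ} (ht₀ : t₀ < m)
    (h : (ℓ * t - m * s : ℤ) = ℓ * t₀ - m * s₀) :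
    ∃ r : R, ((z ^ s : Qˣ) : Q) * y ^ t = r • (((z ^ s₀ : Qˣ) : Q) * y ^ t₀) := by
  obtain ⟨k, rfl, rfl⟩ := exists_eq_add_mul_of_weight_eq hcop ht₀ h
  refine ⟨g₁ ^ k, ?_⟩
  rw [Algebra.smul_def, map_pow, ← hg₁, zpow_add, zpow_natCast, Units.val_mul,
    Units.val_pow_eq_pow_val]
  ring

end Weight

section Relations

variable {R A L Q : Type*} [CommRing R] [CommRing A] [CommRing L] [CommRing Q]
  [Algebra A L] [Algebra R L] [Algebra R Q] {m ℓ d e : ℕ} {u : Lˣ} {a b : Aˣ}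
  {z : Qˣ} {y : Q} {ψ : Q →ₐ[R] L}

lemma map_zpow_mul_pow_eq_smul_zpow
    (hz : Units.map (ψ : Q →* L) z = Units.map (algebraMap A L : A →* L) a * (u ^ m)⁻¹)
    (hy : ψ y = (Units.map (algebraMap A L : A →* L) b * u ^ ℓ : Lˣ)) (s : ℤ) (t : ℕ) :
    ψ (((z ^ s : Qˣ) : Q) * y ^ t) =
      ((a ^ s * b ^ t : Aˣ) : A) • ((u ^ (ℓ * t - m * s : ℤ) : Lˣ) : L) := by
  have hzpow : ψ ((z ^ s : Qˣ) : Q) = ((Units.map (ψ : Q →* L) z ^ s : Lˣ) : L) := by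
    rw [← map_zpow]; rfl
  rw [map_mul, map_pow, hy, hzpow, hz, ← Units.val_pow_eq_pow_val, ← Units.val_mul,
    mul_zpow_mul_mul_pow_eq, ← map_zpow, ← map_pow, ← map_mul, Algebra.smul_def]
  rfl

theorem injective_of_monomial_relations [Algebra R A] [IsScalarTower R A L] [FaithfulSMul R A]
    [FaithfulSMul A L] {φ : A} (hu : (u : L) = algebraMap A L φ) (hm : 0 < m)
    (hde : ℓ * d = m * e + 1)
    (hz : Units.map (ψ : Q →* L) z = Units.map (algebraMap A L : A →* L) a * (u ^ m)⁻¹)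
    (hy : ψ y = (Units.map (algebraMap A L : A →* L) b * u ^ ℓ : Lˣ)) {g₁ g₂ g₃ : R}
    (hg₁ : (z : Q) ^ ℓ * y ^ m = algebraMap R Q g₁)
    (hg₃ : algebraMap R Q g₂ * (z : Q) ^ e * y ^ d = algebraMap R Q g₃)
    (hdvd : ∀ r : R, φ ∣ algebraMap R A r → g₃ ∣ r)
    (hspan : Submodule.span R (Set.range fun p : ℤ × ℕ ↦ ((z ^ p.1 : Qˣ) : Q) * y ^ p.2) = ⊤) :
    Function.Injective ψ := by
  have hde' : (ℓ * d : ℤ) = m * e + 1 := mod_cast hde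
  have hcop : IsCoprime (m : ℤ) ℓ := ⟨-e, d, by linear_combination hde'⟩
  choose s t ht hst using exists_lt_and_weight_eq hm hcop
  let M (n : ℤ) : Q := ((z ^ s n : Qˣ) : Q) * y ^ t n
  have monomial_eq_smul (i : ℤ) (j : ℕ) {n : ℤ} (hn : ℓ * j - m * i = n) :
      ∃ r : R, ((z ^ i : Qˣ) : Q) * y ^ j = r • M n :=
    exists_monomial_eq_smul_of_weight_eq hcop hg₁ (ht n) (hn.trans (hst n).symm)
  have map_M (n : ℤ) : ψ (M n) = ((a ^ s n * b ^ t n : Aˣ) : A) • ((u ^ n : Lˣ) : L) := by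
    rw [map_zpow_mul_pow_eq_smul_zpow hz hy, hst]
  have step (n : ℤ) : ∃ r : R, g₃ • M n = r • M (n + 1) := by
    obtain ⟨r, hr⟩ := monomial_eq_smul (s n + e) (t n + d) (n := n + 1)
      (by push_cast; linear_combination hst n + hde')
    refine ⟨g₂ * r, ?_⟩
    rw [mul_smul, ← hr, Algebra.smul_def, Algebra.smul_def, ← hg₃, zpow_add, zpow_natCast,
      Units.val_mul, Units.val_pow_eq_pow_val]
    ring
  have span_M : Submodule.span R (Set.range M) = ⊤ := by
    rw [eq_top_iff, ← hspan, Submodule.span_le]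
    rintro _ ⟨⟨i, j⟩, rfl⟩
    obtain ⟨r, hr⟩ := monomial_eq_smul i j rfl
    simpa only [hr, SetLike.mem_coe] using
      Submodule.smul_mem _ r (Submodule.subset_span (Set.mem_range_self _))
  exact injective_of_map_generator_eq_smul_zpow (ψ := ψ.toLinearMap) hu map_M step hdvd span_M

end Relations

section Ideal

open MvPolynomial

variable {R S : Type*} [CommRing R] [CommRing S] [Algebra R S]

/-- The ideal of relations `(XZ - 1, Z ^ ℓ * Y ^ m - g₁, g₂ * Z ^ e * Y ^ d - g₃)` of `R[X, Z, Y]`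
that presents the enlargement, with the variables `X`, `Z`, `Y` encoded as `X 0`, `X 1`, `X 2`. -/
def enlargementIdeal (m ℓ d e : ℕ) (g₁ g₂ g₃ : R) : Ideal (MvPolynomial (Fin 3) R) :=
  Ideal.span {X 0 * X 1 - 1, X 1 ^ ℓ * X 2 ^ m - C g₁, C g₂ * X 1 ^ e * X 2 ^ d - C g₃}

lemma enlargementIdeal_le_ker_iff {m ℓ d e : ℕ} {g₁ g₂ g₃ : R}
    {f : MvPolynomial (Fin 3) R →ₐ[R] S} :
    enlargementIdeal m ℓ d e g₁ g₂ g₃ ≤ RingHom.ker f ↔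
      f (X 0) * f (X 1) = 1 ∧ f (X 1) ^ ℓ * f (X 2) ^ m = algebraMap R S g₁ ∧
        algebraMap R S g₂ * f (X 1) ^ e * f (X 2) ^ d = algebraMap R S g₃ := by
  simp only [enlargementIdeal, Ideal.span_le, Set.insert_subset_iff, Set.singleton_subset_iff,
    SetLike.mem_coe, RingHom.mem_ker, map_sub, map_mul, map_pow, map_one, sub_eq_zero,
    ← algebraMap_eq, AlgHom.commutes]

lemma span_range_zpow_mul_pow_eq_top {f : MvPolynomial (Fin 3) R →ₐ[R] S}
    (hf : Function.Surjective f) {z : Sˣ} (hX : f (X 0) = (z⁻¹ : Sˣ)) (hZ : f (X 1) = z) :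
    Submodule.span R (Set.range fun p : ℤ × ℕ ↦ ((z ^ p.1 : Sˣ) : S) * f (X 2) ^ p.2) = ⊤ := by
  have map_basis (k : Fin 3 →₀ ℕ) :
      f (basisMonomials (Fin 3) R k) = ((z ^ (k 1 - k 0 : ℤ) : Sˣ) : S) * f (X 2) ^ k 2 := by
    simp only [coe_basisMonomials]
    rw [monomial_eq, Finsupp.prod_fintype _ _ (by simp), Fin.prod_univ_three,
      map_one, one_mul, map_mul, map_mul, map_pow, map_pow, map_pow, hX, hZ, sub_eq_neg_add,
      zpow_add, zpow_neg, ← inv_zpow, zpow_natCast, zpow_natCast, Units.val_mul,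
      Units.val_pow_eq_pow_val, Units.val_pow_eq_pow_val]
  rw [eq_top_iff, ← (LinearMap.range_eq_top (f := f.toLinearMap)).mpr hf, LinearMap.range_eq_map,
    ← (basisMonomials (Fin 3) R).span_eq, Submodule.map_span, Submodule.span_le]
  rintro _ ⟨_, ⟨k, rfl⟩, rfl⟩
  exact Submodule.subset_span ⟨(k 1 - k 0, k 2), (map_basis k).symm⟩

end Ideal

section Kernel

open MvPolynomial

variable {R A L : Type*} [CommRing R] [CommRing A] [CommRing L] [Algebra R A] [Algebra A L]
  [Algebra R L] {m ℓ d e : ℕ} {g₁ g₂ g₃ : R} {f : MvPolynomial (Fin 3) R →ₐ[R] L} {u : Lˣ}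

lemma enlargementIdeal_le_ker_of_map_X_eq (hde : ℓ * d = m * e + 1) {a b c : Lˣ}
    (hX : f (X 0) = (a⁻¹ * u ^ m : Lˣ)) (hZ : f (X 1) = (a * (u ^ m)⁻¹ : Lˣ))
    (hY : f (X 2) = (b⁻¹ * u ^ ℓ : Lˣ)) (hg₁ : algebraMap R L g₁ = (a ^ ℓ * b⁻¹ ^ m : Lˣ))
    (hg₂ : algebraMap R L g₂ = (a⁻¹ ^ e * b ^ d * c⁻¹ : Lˣ))
    (hg₃ : algebraMap R L g₃ = (c⁻¹ * u : Lˣ)) :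
    enlargementIdeal m ℓ d e g₁ g₂ g₃ ≤ RingHom.ker f := by
  have monomial_eq (s t : ℕ) := mul_zpow_mul_mul_pow_eq (m := m) (ℓ := ℓ) a b⁻¹ u s t
  simp only [zpow_natCast] at monomial_eq
  rw [enlargementIdeal_le_ker_iff, hX, hZ, hY, hg₁, hg₂, hg₃]
  norm_cast
  refine ⟨?_, ?_, ?_⟩
  · rw [mul_mul_mul_comm, inv_mul_cancel, mul_inv_cancel, mul_one, Units.val_one]
  · rw [monomial_eq, mul_comm (ℓ : ℤ), sub_self, zpow_zero, mul_one]
  · have weight_eq_one : (ℓ * d - m * e : ℤ) = 1 := by lia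
    rw [mul_assoc, monomial_eq, weight_eq_one, zpow_one, mul_mul_mul_comm (a⁻¹ ^ e * b ^ d),
      mul_mul_mul_comm (a⁻¹ ^ e), ← mul_pow, ← mul_pow, inv_mul_cancel, mul_inv_cancel,
      one_pow, one_pow, one_mul, one_mul]

theorem ker_eq_enlargementIdeal_of_le_ker [IsScalarTower R A L] [FaithfulSMul R A]
    [FaithfulSMul A L] {φ : A} (hu : (u : L) = algebraMap A L φ) (hm : 0 < m)
    (hde : ℓ * d = m * e + 1) {a b : Aˣ}
    (hZ : f (X 1) = (Units.map (algebraMap A L : A →* L) a * (u ^ m)⁻¹ : Lˣ))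
    (hY : f (X 2) = (Units.map (algebraMap A L : A →* L) b * u ^ ℓ : Lˣ))
    (hdvd : ∀ r : R, φ ∣ algebraMap R A r → g₃ ∣ r)
    (hle : enlargementIdeal m ℓ d e g₁ g₂ g₃ ≤ RingHom.ker f) :
    RingHom.ker f = enlargementIdeal m ℓ d e g₁ g₂ g₃ := by
  set I := enlargementIdeal m ℓ d e g₁ g₂ g₃ with hI
  obtain ⟨hXZ, hg₁, hg₃⟩ :=
    enlargementIdeal_le_ker_iff.mp (hI ▸ (Ideal.Quotient.mkₐ_ker R I).ge)
  let π := Ideal.Quotient.mkₐ R I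
  let z : (MvPolynomial (Fin 3) R ⧸ I)ˣ := ⟨π (X 1), π (X 0), mul_comm (π (X 1)) _ ▸ hXZ, hXZ⟩
  have injective_lift : Function.Injective (Ideal.Quotient.liftₐ I f hle) :=
    injective_of_monomial_relations (z := z) hu hm hde (Units.ext hZ) hY hg₁ hg₃ hdvd
      (span_range_zpow_mul_pow_eq_top (Ideal.Quotient.mkₐ_surjective R I) rfl rfl)
  exact (Ideal.injective_lift_iff hle).mp injective_lift

end Kernel

section Valuation

variable {A : Type*} [CommRing A] {v : AddValuation A (WithTop ℝ)}

lemma unitBall_dvd_of_coe_dvd {g a : v.unitBall} (hg : v g = 0) (h : (g : A) ∣ a) : g ∣ a := by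
  obtain ⟨b, hb⟩ := h
  have hb₀ : 0 ≤ v b := by
    have ha : 0 ≤ v (a : A) := a.2
    rwa [hb, v.map_mul, hg, zero_add] at ha
  exact ⟨⟨b, hb₀⟩, Subtype.ext hb⟩

lemma unitBall_dvd_of_dvd_coe {φ : A} {θ : Aˣ} (hθ : v θ = v φ) {g : v.unitBall}
    (hg : (g : A) = (↑θ⁻¹ : A) * φ) {a : v.unitBall} (h : φ ∣ a) : g ∣ a := by
  refine unitBall_dvd_of_coe_dvd ?_ (hg ▸ Units.mul_left_dvd.mpr h)
  rw [hg, v.map_mul, ← hθ, ← v.map_mul, Units.inv_mul, v.map_one]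

end Valuation

section Localization

variable {A : Type*} [CommRing A]

lemma algebraMap_mul_invSelf_localizationAway (φ : A) :
    algebraMap A (Localization.Away φ) φ * Localization.Away.invSelf φ = 1 := by
  rw [Localization.Away.invSelf, Localization.mk_eq_mk']
  exact IsLocalization.Away.mul_invSelf φ

lemma faithfulSMul_localizationAway {φ : A} (hφ : φ ∈ nonZeroDivisors A) :
    FaithfulSMul A (Localization.Away φ) :=
  (faithfulSMul_iff_algebraMap_injective _ _).mpr
    (IsLocalization.injective _ (Submonoid.powers_le.mpr hφ))

end Localization

open MvPolynomial in
theorem kernel_aeval_enlargement_case_aleph_general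
    {R A L : Type*} [CommRing R] [CommRing A] [CommRing L] [Algebra R A] [Algebra A L]
    [Algebra R L] [IsScalarTower R A L] [FaithfulSMul R A] [FaithfulSMul A L]
    {φ : A} {w : L} (hw : algebraMap A L φ * w = 1)
    {m ℓ d e : ℕ} (hm : 1 ≤ m) (hde : ℓ * d = m * e + 1) (α β θ : Aˣ) {g₁ g₂ g₃ : R}
    (hg₁ : algebraMap R A g₁ = (↑α : A) ^ ℓ * (↑β⁻¹ : A) ^ m)
    (hg₂ : algebraMap R A g₂ = (↑α⁻¹ : A) ^ e * (↑β : A) ^ d * (↑θ⁻¹ : A))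
    (hg₃ : algebraMap R A g₃ = (↑θ⁻¹ : A) * φ)
    (hdvd : ∀ a : R, φ ∣ algebraMap R A a → g₃ ∣ a) :
    RingHom.ker (aeval (R := R)
        ![algebraMap A L ((↑α⁻¹ : A) * φ ^ m), algebraMap A L (↑α : A) * w ^ m,
          algebraMap A L ((↑β⁻¹ : A) * φ ^ ℓ)]) =
      enlargementIdeal m ℓ d e g₁ g₂ g₃ := by
  let u : Lˣ := Units.mkOfMulEqOne _ w hw
  let toL : Aˣ →* Lˣ := Units.map (algebraMap A L : A →* L)
  set f : MvPolynomial (Fin 3) R →ₐ[R] L := aeval _ with hf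
  have hX : f (X 0) = ((toL α)⁻¹ * u ^ m : Lˣ) := by
    rw [hf, aeval_X, Matrix.cons_val_zero, map_mul, map_pow]; rfl
  have hZ : f (X 1) = (toL α * (u ^ m)⁻¹ : Lˣ) := by
    rw [hf, aeval_X, Matrix.cons_val_one, Matrix.cons_val_zero, ← inv_pow]; rfl
  have hY : f (X 2) = ((toL β)⁻¹ * u ^ ℓ : Lˣ) := by
    refine (aeval_X _ 2).trans (?_ : algebraMap A L ((↑β⁻¹ : A) * φ ^ ℓ) = _)
    rw [map_mul, map_pow]; rfl
  have map_unit {g : R} {x : Lˣ} {a : A} (hg : algebraMap R A g = a)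
      (hx : algebraMap A L a = x) : algebraMap R L g = x := by
    rw [IsScalarTower.algebraMap_apply R A L, hg, hx]
  have hle : enlargementIdeal m ℓ d e g₁ g₂ g₃ ≤ RingHom.ker f :=
    enlargementIdeal_le_ker_of_map_X_eq (c := toL θ) hde hX hZ hY
      (map_unit hg₁ (by simp only [map_mul, map_pow]; rfl))
      (map_unit hg₂ (by simp only [map_mul, map_pow]; rfl))
      (map_unit hg₃ (by rw [map_mul]; rfl))
  exact ker_eq_enlargementIdeal_of_le_ker (b := β⁻¹) rfl hm hde hZ hY hdvd hle

/-- With `(A, v)` a scalable semi-valued `(K, v_K)`-algebra, a domain with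
trivial kernel and `⋂ₙ φⁿA = 0` for the prime `φ`, let `m, ℓ ≥ 1` be coprime, `d, e ∈ ℕ` with
`ℓd − me = 1`, and `α, β, θ ∈ A^×` with `v(θ) = v(φ)`, `α^ℓβ^{−m} ∈ A°`,
`α^{−e}β^{d}θ^{−1} ∈ A°`.  Then the kernel of the `A°`-algebra map `A°[X, Z, Y] → A[φ⁻¹]`,
`X ↦ α⁻¹φ^m`, `Z ↦ αφ^{−m}`, `Y ↦ β⁻¹φ^ℓ`, is the ideal generated by `X·Z − 1`,
`Z^ℓ·Y^m − α^ℓβ^{−m}` and `(α^{−e}β^{d}θ^{−1})·Z^{e}·Y^{d} − θ^{−1}φ`. -/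
theorem kernel_aeval_enlargement_case_aleph
    {K A : Type*} [Field K] [CommRing A] [IsDomain A] [Algebra K A]
    (vK : AddValuation K (WithTop ℝ)) (hnt : vK.IsNontrivial)
    (v : AddValuation A (WithTop ℝ))
    (hext : ∀ x : K, v (algebraMap K A x) = vK x)
    (hker : ∀ x : A, v x = ⊤ → x = 0)
    (hscal : v.ScalableOn ⊤)
    (φ : A) (hφ : Prime φ)
    (hsep : ∀ x : A, (∀ n : ℕ, φ ^ n ∣ x) → x = 0)
    (m ℓ d e : ℕ) (hm : 1 ≤ m) (hℓ : 1 ≤ ℓ) (hcop : Nat.Coprime m ℓ)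
    (hde : ℓ * d = m * e + 1)
    (α β θ : Aˣ) (hθ : v ↑θ = v φ)
    (g₁ g₂ g₃ : v.unitBall)
    (hg₁ : (g₁ : A) = (↑α : A) ^ ℓ * (↑β⁻¹ : A) ^ m)
    (hg₂ : (g₂ : A) = (↑α⁻¹ : A) ^ e * (↑β : A) ^ d * (↑θ⁻¹ : A))
    (hg₃ : (g₃ : A) = (↑θ⁻¹ : A) * φ) :
    RingHom.ker (MvPolynomial.aeval (R := v.unitBall)
        ![algebraMap A (Localization.Away φ) ((↑α⁻¹ : A) * φ ^ m),
          algebraMap A (Localization.Away φ) (↑α : A) * (Localization.Away.invSelf φ) ^ m,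
          algebraMap A (Localization.Away φ) ((↑β⁻¹ : A) * φ ^ ℓ)]) =
      Ideal.span
        {MvPolynomial.X 0 * MvPolynomial.X 1 - 1,
         (MvPolynomial.X 1 : MvPolynomial (Fin 3) v.unitBall) ^ ℓ * MvPolynomial.X 2 ^ m -
           MvPolynomial.C g₁,
         MvPolynomial.C g₂ * MvPolynomial.X 1 ^ e * MvPolynomial.X 2 ^ d -
           MvPolynomial.C g₃} := by
  have := faithfulSMul_localizationAway (mem_nonZeroDivisors_of_ne_zero hφ.ne_zero)
  exact kernel_aeval_enlargement_case_aleph_general (algebraMap_mul_invSelf_localizationAway φ)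
    hm hde α β θ hg₁ hg₂ hg₃ fun _ ↦ unitBall_dvd_of_dvd_coe hθ hg₃
end
end
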